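/- There exist constants c > 0 and C > 0 such that for all integers d ≥ 2 and m ≥ d, the expected star discrepancy of a jittered sampling point set P of N = m^d points in [0,1)^d satisfies c · d · m^((d−1)/2) · √(1 + log(m/d)) ≤ E[D*(P)] ≤ C · d · m^((d−1)/2) · √(1 + log(m/d)). -/

import Mathlib

open MeasureTheory ProbabilityTheory Real

noncomputable section

/-- The axis-aligned cube `∏_i [x_i/m, x_i/m + 1/m)` of the `m`-grid partition of `[0,1)^d`. -/
def jitterCube (m d : ℕ) (x : Fin d → Fin m) : Set (Fin d → ℝ) :=
  Set.univ.pi fun i => Set.Ico ((x i : ℝ) / m) ((x i : ℝ) / m + 1 / m)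

/-- The distribution of a jittered sampling point configuration: independently, one point
uniformly distributed in each of the `m^d` cubes. -/
def jitterMeasure (m d : ℕ) : Measure ((Fin d → Fin m) → (Fin d → ℝ)) :=
  Measure.pi fun x => ((m : ENNReal) ^ d) • volume.restrict (jitterCube m d x)

open scoped Classical in
/-- Signed (non-normalized) discrepancy `|P ∩ A| - N·λ(A)` with `N = m^d` of a point
configuration `P`. -/
def jdisc (m d : ℕ) (P : (Fin d → Fin m) → (Fin d → ℝ)) (A : Set (Fin d → ℝ)) : ℝ :=
  ((Finset.univ.filter fun x => P x ∈ A).card : ℝ) - (m : ℝ) ^ d * (volume A).toReal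

/-- The anchored box `[0,y) = ∏_i [0, y_i)`. -/
def anchoredBox (d : ℕ) (y : Fin d → ℝ) : Set (Fin d → ℝ) :=
  Set.univ.pi fun i => Set.Ico 0 (y i)

/-- The (non-normalized) star discrepancy `D*(P) = sup_{y ∈ [0,1)^d} |disc([0,y))|`. -/
def starDisc (m d : ℕ) (P : (Fin d → Fin m) → (Fin d → ℝ)) : ℝ :=
  ⨆ y : {y : Fin d → ℝ // ∀ i, y i ∈ Set.Ico (0 : ℝ) 1}, |jdisc m d P (anchoredBox d y.1)|

/-- The expected star discrepancy of a jittered sampling point set of `m^d` points. -/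
def expStarDisc (m d : ℕ) : ℝ :=
  ∫ P, starDisc m d P ∂(jitterMeasure m d)

/-!
Both bounds rest on writing the discrepancy of a box as the sum, over the cubes of the grid, of
independent centered variables bounded by one; cubes inside or outside the box contribute nothing.

For the upper bound, a chaining argument approximates a box from below and above by boxes from ever
finer finite covers, and the coarsest approximation by a box made of whole cubes, which has
discrepancy zero. The difference of two consecutive approximations has small volume, so its
discrepancy has a small exponential moment, and the maximum over a cover costs only the logarithm
of its cardinality.

For the lower bound, let the box end near the corner `(1, …, 1)`. In each of the `d` directions
its upper face may be chosen among about `m / d` layers of about `m ^ (d - 1)` cubes. A face which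
bisects a layer earns half a sum of that many random signs, and the best of `m / d` independent
such sums is of order `√(m ^ (d - 1) (1 + log (m / d)))`. The remaining cubes contribute zero on
average, because the choice of the faces does not depend on their points.
-/

section Subexponential

variable {Ω ι : Type*} [MeasurableSpace Ω] {μ : Measure Ω} {X : Ω → ℝ} {v ℓ : ℝ}

/-- Sub-exponential random variables with variance proxy `2 * v` and scale `1`: the moment
generating function is at most that of a centered Gaussian of variance `2 * v` on `[-1, 1]`. -/
structure HasSubexponentialMGF (X : Ω → ℝ) (v : ℝ) (μ : Measure Ω) : Prop where
  integrable_exp_mul : ∀ t, |t| ≤ 1 → Integrable (fun ω ↦ exp (t * X ω)) μ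
  mgf_le : ∀ t, |t| ≤ 1 → mgf X μ t ≤ exp (t ^ 2 * v)

lemma mgf_le_one_add_add [IsProbabilityMeasure μ] (hX : AEMeasurable X μ) (hX1 : ∀ ω, |X ω| ≤ 1)
    {t : ℝ} (ht : |t| ≤ 1) : mgf X μ t ≤ 1 + t * μ[X] + t ^ 2 * μ[X ^ 2] := by
  have hXi : Integrable X μ := .of_bound hX.aestronglyMeasurable 1 (.of_forall hX1)
  have hX2i : Integrable (X ^ 2) μ := .of_bound (hX.pow_const 2).aestronglyMeasurable 1
    (.of_forall fun ω ↦ by simpa using hX1 ω)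
  have hexp (ω : Ω) : exp (t * X ω) ≤ 1 + t * X ω + t ^ 2 * (X ^ 2) ω := by
    have := (abs_le.1 (abs_exp_sub_one_sub_id_le
      (by rw [abs_mul]; exact mul_le_one₀ ht (abs_nonneg _) (hX1 ω)))).2
    simp only [Pi.pow_apply]
    linarith [mul_pow t (X ω) 2]
  calc mgf X μ t ≤ ∫ ω, (1 + t * X ω + t ^ 2 * (X ^ 2) ω) ∂μ :=
        integral_mono_of_nonneg (.of_forall fun _ ↦ (exp_pos _).le) (by fun_prop) (.of_forall hexp)
    _ = 1 + t * μ[X] + t ^ 2 * μ[X ^ 2] := by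
        rw [integral_add (by fun_prop) (by fun_prop), integral_add (by fun_prop) (by fun_prop),
          integral_const_mul, integral_const_mul]
        simp

namespace HasSubexponentialMGF

lemma mono {w : ℝ} (h : HasSubexponentialMGF X v μ) (hvw : v ≤ w) :
    HasSubexponentialMGF X w μ :=
  ⟨h.integrable_exp_mul, fun t ht ↦ (h.mgf_le t ht).trans (by gcongr)⟩

lemma comp_measurePreserving {Ω' : Type*} [MeasurableSpace Ω'] {μ' : Measure Ω'} {f : Ω' → Ω}
    (h : HasSubexponentialMGF X v μ) (hf : MeasurePreserving f μ' μ) :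
    HasSubexponentialMGF (X ∘ f) v μ' where
  integrable_exp_mul t ht := hf.integrable_comp_of_integrable (h.integrable_exp_mul t ht)
  mgf_le t ht := by
    refine le_of_eq_of_le ?_ (h.mgf_le t ht)
    have hexp := (h.integrable_exp_mul t ht).aestronglyMeasurable
    rw [← hf.map_eq] at hexp
    rw [mgf, mgf, ← hf.map_eq, integral_map hf.aemeasurable hexp]
    rfl

lemma integrable (h : HasSubexponentialMGF X v μ) : Integrable X μ := by
  simpa using integrable_pow_of_integrable_exp_mul one_ne_zero
    (h.integrable_exp_mul 1 (by simp)) (h.integrable_exp_mul (-1) (by simp)) 1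

lemma sum {X : ι → Ω → ℝ} {v : ι → ℝ} [IsFiniteMeasure μ] (hind : iIndepFun X μ)
    (hX : ∀ i, Measurable (X i)) (h : ∀ i, HasSubexponentialMGF (X i) (v i) μ) (s : Finset ι) :
    HasSubexponentialMGF (∑ i ∈ s, X i) (∑ i ∈ s, v i) μ where
  integrable_exp_mul t ht :=
    hind.integrable_exp_mul_sum hX fun i _ ↦ (h i).integrable_exp_mul t ht
  mgf_le t ht := by
    rw [hind.mgf_sum hX, Finset.mul_sum, exp_sum]
    exact Finset.prod_le_prod (fun i _ ↦ mgf_nonneg) fun i _ ↦ (h i).mgf_le t ht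

lemma sub_integral_of_abs_le_one [IsProbabilityMeasure μ] (hX : AEMeasurable X μ)
    (hX1 : ∀ ω, |X ω| ≤ 1) : HasSubexponentialMGF (fun ω ↦ X ω - μ[X]) (μ[X ^ 2]) μ where
  integrable_exp_mul t ht := by
    refine .of_bound (by fun_prop) (exp (1 + |μ[X]|)) (.of_forall fun ω ↦ ?_)
    rw [norm_eq_abs, abs_exp, exp_le_exp]
    calc t * (X ω - μ[X]) ≤ |t| * |X ω - μ[X]| := (le_abs_self _).trans_eq (abs_mul _ _)
      _ ≤ 1 * (|X ω| + |μ[X]|) := by gcongr; exact abs_sub _ _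
      _ ≤ 1 + |μ[X]| := by linarith [hX1 ω]
  mgf_le t ht := by
    simp only [sub_eq_add_neg, mgf_add_const]
    calc mgf X μ t * exp (t * -μ[X])
        ≤ exp (t * μ[X] + t ^ 2 * μ[X ^ 2]) * exp (t * -μ[X]) := by
          gcongr
          linarith [mgf_le_one_add_add hX hX1 ht, add_one_le_exp (t * μ[X] + t ^ 2 * μ[X ^ 2])]
      _ = exp (t ^ 2 * μ[X ^ 2]) := by rw [← exp_add]; congr 1; ring

end HasSubexponentialMGF

lemma integrable_iSup_abs [Finite ι] {X : ι → Ω → ℝ} (hX : ∀ i, Integrable (X i) μ) :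
    Integrable (fun ω ↦ ⨆ i, |X i ω|) μ := by
  have := Fintype.ofFinite ι
  refine .mono' (integrable_finsetSum Finset.univ fun i _ ↦ (hX i).abs)
    (AEMeasurable.iSup fun i ↦ (hX i).abs.aemeasurable).aestronglyMeasurable
    (.of_forall fun ω ↦ ?_)
  rw [norm_eq_abs, abs_of_nonneg (iSup_nonneg fun _ ↦ abs_nonneg _)]
  exact Real.iSup_le (fun i ↦ Finset.single_le_sum (f := fun i ↦ |X i ω|)
    (fun _ _ ↦ abs_nonneg _) (Finset.mem_univ i)) (Finset.sum_nonneg fun _ _ ↦ abs_nonneg _)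

variable [Fintype ι] [Nonempty ι] {X : ι → Ω → ℝ}

lemma mul_iSup_abs_le {x : ι → ℝ} (t K : ℝ) (ht : 0 ≤ t) :
    t * ⨆ i, |x i| ≤ K - 1 + exp (-K) * ∑ i, (exp (t * x i) + exp (-t * x i)) := by
  obtain ⟨i, hi⟩ := exists_eq_ciSup_of_finite (f := fun i ↦ |x i|)
  have habs : exp (t * |x i|) ≤ exp (t * x i) + exp (-t * x i) := by
    rcases abs_choice (x i) with h | h <;> rw [h]
    · linarith [exp_pos (-t * x i)]
    · rw [mul_neg, ← neg_mul]; linarith [exp_pos (t * x i)]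
  have hsum : exp (t * |x i|) ≤ ∑ i, (exp (t * x i) + exp (-t * x i)) :=
    habs.trans (Finset.single_le_sum (f := fun i ↦ exp (t * x i) + exp (-t * x i))
      (fun _ _ ↦ by positivity) (Finset.mem_univ i))
  calc t * ⨆ i, |x i| ≤ K - 1 + exp (-K + t * |x i|) := by
        rw [← hi]; linarith [add_one_le_exp (-K + t * |x i|)]
    _ ≤ _ := by rw [exp_add]; gcongr

variable [IsProbabilityMeasure μ]

lemma mul_integral_iSup_abs_le (h : ∀ i, HasSubexponentialMGF (X i) v μ)
    (hℓ : 2 * (Fintype.card ι : ℝ) ≤ exp ℓ) {t : ℝ} (ht0 : 0 ≤ t) (ht1 : t ≤ 1) :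
    t * ∫ ω, ⨆ i, |X i ω| ∂μ ≤ ℓ + t ^ 2 * v := by
  set K := ℓ + t ^ 2 * v
  have hpos : |t| ≤ 1 := by rwa [abs_of_nonneg ht0]
  have hneg : |-t| ≤ 1 := by rwa [abs_neg]
  have hint (i : ι) : Integrable (fun ω ↦ exp (t * X i ω) + exp (-t * X i ω)) μ :=
    ((h i).integrable_exp_mul t hpos).add ((h i).integrable_exp_mul (-t) hneg)
  have hsum : ∫ ω, ∑ i, (exp (t * X i ω) + exp (-t * X i ω)) ∂μ ≤ exp K := by
    calc ∫ ω, ∑ i, (exp (t * X i ω) + exp (-t * X i ω)) ∂μ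
        = ∑ i, (mgf (X i) μ t + mgf (X i) μ (-t)) := by
          rw [integral_finsetSum _ fun i _ ↦ hint i]
          exact Finset.sum_congr rfl fun i _ ↦ integral_add
            ((h i).integrable_exp_mul t hpos) ((h i).integrable_exp_mul (-t) hneg)
      _ ≤ ∑ _i : ι, 2 * exp (t ^ 2 * v) := Finset.sum_le_sum fun i _ ↦ by
          linarith [(h i).mgf_le t hpos, neg_sq t ▸ (h i).mgf_le (-t) hneg]
      _ = 2 * Fintype.card ι * exp (t ^ 2 * v) := by
          rw [Finset.sum_const, nsmul_eq_mul, Finset.card_univ]; ring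
      _ ≤ exp ℓ * exp (t ^ 2 * v) := by gcongr
      _ = exp K := (exp_add _ _).symm
  have hS := integrable_finsetSum Finset.univ fun i _ ↦ hint i
  rw [← integral_const_mul]
  calc ∫ ω, t * ⨆ i, |X i ω| ∂μ
      ≤ ∫ ω, (K - 1 + exp (-K) * ∑ i, (exp (t * X i ω) + exp (-t * X i ω))) ∂μ :=
        integral_mono ((integrable_iSup_abs fun i ↦ (h i).integrable).const_mul t)
          ((integrable_const _).add (hS.const_mul _)) fun ω ↦ mul_iSup_abs_le t K ht0
    _ = K - 1 + exp (-K) * ∫ ω, ∑ i, (exp (t * X i ω) + exp (-t * X i ω)) ∂μ := by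
        rw [integral_add (integrable_const _) (hS.const_mul _), integral_const_mul]
        simp
    _ ≤ K - 1 + exp (-K) * exp K := by gcongr
    _ = K := by rw [← exp_add]; simp

lemma integral_iSup_abs_le (h : ∀ i, HasSubexponentialMGF (X i) v μ)
    (hℓ : 2 * (Fintype.card ι : ℝ) ≤ exp ℓ) :
    ∫ ω, ⨆ i, |X i ω| ∂μ ≤ 2 * √(v * ℓ) + 2 * ℓ := by
  have hℓ0 : 0 < ℓ := by
    have : (1 : ℝ) ≤ Fintype.card ι := by exact_mod_cast Fintype.card_pos
    exact Real.one_lt_exp_iff.1 (by linarith)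
  rcases le_total v ℓ with hv | hv
  · linarith [mul_integral_iSup_abs_le h hℓ zero_le_one le_rfl, sqrt_nonneg (v * ℓ)]
  -- the optimal `t` balances the two terms in `ℓ / t + t v`
  · have hv0 : 0 < v := hℓ0.trans_le hv
    have ht : 0 < √(ℓ / v) := sqrt_pos.2 (by positivity)
    have hmul : √(ℓ / v) * √(v * ℓ) = ℓ := by
      rw [← sqrt_mul (by positivity), show ℓ / v * (v * ℓ) = ℓ ^ 2 by field_simp, sqrt_sq hℓ0.le]
    have := mul_integral_iSup_abs_le h hℓ ht.le (sqrt_le_one.2 (div_le_one_of_le₀ hv hv0.le))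
    rw [sq_sqrt (by positivity), div_mul_cancel₀ _ hv0.ne'] at this
    refine le_of_mul_le_mul_left (this.trans ?_) ht
    nlinarith

end Subexponential

section Independence

variable {Ω ι κ : Type*}

lemma measurable_comap_sum {f : ι → Ω → ℝ} {S : Finset ι} {T : Set ι} (hST : ↑S ⊆ T) :
    Measurable[⨆ i ∈ T, MeasurableSpace.comap (f i) inferInstance] fun ω ↦ ∑ i ∈ S, f i ω :=
  Finset.measurable_sum _ fun i hi ↦ (comap_measurable (f i)).mono
    (le_biSup (fun i ↦ MeasurableSpace.comap (f i) inferInstance) (hST hi)) le_rfl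

variable [MeasurableSpace Ω] {μ : Measure Ω}

lemma indepFun_sum_of_disjoint {f : ι → Ω → ℝ} (hind : iIndepFun f μ) (hf : ∀ i, Measurable (f i))
    {S T : Finset ι} (hST : Disjoint S T) :
    IndepFun (fun ω ↦ ∑ i ∈ S, f i ω) (fun ω ↦ ∑ i ∈ T, f i ω) μ :=
  (IndepFun_iff_Indep _ _ _).2 <| indep_of_indep_of_le_left (indep_of_indep_of_le_right
    (indep_iSup_of_disjoint (fun i ↦ (hf i).comap_le) hind.iIndep
      (Finset.disjoint_coe.2 hST))
    (measurable_comap_sum subset_rfl).comap_le) (measurable_comap_sum subset_rfl).comap_le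

lemma iIndepFun_sum_of_pairwise_disjoint {f : ι → Ω → ℝ} (hind : iIndepFun f μ)
    (hf : ∀ i, Measurable (f i)) {S : κ → Finset ι} (hS : Pairwise (Function.onFun Disjoint S)) :
    iIndepFun (fun k ω ↦ ∑ i ∈ S k, f i ω) μ := by
  classical
  rw [iIndepFun_iff_measure_inter_preimage_eq_mul]
  intro A B hB
  induction A using Finset.induction_on with
  | empty => simp [hind.isProbabilityMeasure.measure_univ]
  | insert k A hk ih =>
    have hdisj : Disjoint (S k) (A.biUnion S) := by
      rw [Finset.disjoint_biUnion_right]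
      exact fun j hj ↦ hS (ne_of_mem_of_not_mem hj hk).symm
    have hA : MeasurableSet[⨆ i ∈ (A.biUnion S : Set ι), .comap (f i) inferInstance]
        (⋂ j ∈ A, (fun ω ↦ ∑ i ∈ S j, f i ω) ⁻¹' B j) :=
      Finset.measurableSet_biInter _ fun j hj ↦
        measurable_comap_sum (by exact_mod_cast Finset.subset_biUnion_of_mem S hj)
          (hB j (Finset.mem_insert_of_mem hj))
    rw [Finset.set_biInter_insert, Finset.prod_insert hk,
      ← ih fun j hj ↦ hB j (Finset.mem_insert_of_mem hj)]
    exact (Indep_iff _ _ _).1 (indep_iSup_of_disjoint (fun i ↦ (hf i).comap_le) hind.iIndep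
      (Finset.disjoint_coe.2 hdisj)) _ _
      (measurable_comap_sum subset_rfl (hB k (Finset.mem_insert_self _ _))) hA

lemma one_sub_pow_le_measureReal_exists_le {Y : κ → Ω → ℝ} (hind : iIndepFun Y μ)
    (hY : ∀ k, Measurable (Y k)) (A : Finset κ) {t p : ℝ}
    (hp : ∀ k ∈ A, p ≤ μ.real {ω | t ≤ Y k ω}) :
    1 - (1 - p) ^ A.card ≤ μ.real {ω | ∃ k ∈ A, t ≤ Y k ω} := by
  have := hind.isProbabilityMeasure
  have hcompl : {ω | ∃ k ∈ A, t ≤ Y k ω} = (⋂ k ∈ A, Y k ⁻¹' Set.Iio t)ᶜ := by ext ω; simp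
  have hlt (k : κ) : Y k ⁻¹' Set.Iio t = {ω | t ≤ Y k ω}ᶜ := by ext ω; simp
  rw [hcompl, probReal_compl_eq_one_sub
    (Finset.measurableSet_biInter _ fun k _ ↦ hY k measurableSet_Iio), Measure.real,
    hind.measure_inter_preimage_eq_mul A fun k _ ↦ measurableSet_Iio, ENNReal.toReal_prod]
  gcongr
  calc ∏ k ∈ A, (μ (Y k ⁻¹' Set.Iio t)).toReal ≤ ∏ _k ∈ A, (1 - p) := by
        refine Finset.prod_le_prod (fun _ _ ↦ ENNReal.toReal_nonneg) fun k hk ↦ ?_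
        rw [hlt, ← Measure.real, probReal_compl_eq_one_sub (measurableSet_le (by fun_prop) (hY k))]
        linarith [hp k hk]
    _ = (1 - p) ^ A.card := by simp

lemma indepFun_eval_of_dependsOn [Fintype ι] {E : ι → Type*} {β : Type*} [MeasurableSpace β]
    [∀ i, MeasurableSpace (E i)] (ν : ∀ i, Measure (E i)) [∀ i, IsProbabilityMeasure (ν i)]
    {F : (∀ i, E i) → β} (hF : Measurable F) {i : ι} (hFi : DependsOn F {i}ᶜ) :
    IndepFun F (fun x ↦ x i) (Measure.pi ν) := by
  classical
  obtain ⟨c⟩ := (ν i).nonempty_of_neZero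
  have hupdate : Measurable[⨆ j ∈ ({i}ᶜ : Set ι), .comap (fun x : ∀ i, E i ↦ x j) inferInstance]
      fun x : ∀ i, E i ↦ Function.update x i c := by
    refine (@measurable_pi_iff _ _ _ (_) _ _).2 fun j ↦ ?_
    obtain rfl | hj := eq_or_ne j i
    · simp
    · simpa [hj] using (comap_measurable fun x : ∀ i, E i ↦ x j).mono
        (le_biSup (fun j ↦ MeasurableSpace.comap (fun x : ∀ i, E i ↦ x j) inferInstance)
          (show j ∈ ({i}ᶜ : Set ι) from hj)) le_rfl
  have hFu : F = F ∘ fun x ↦ Function.update x i c :=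
    funext fun x ↦ hFi fun j hj ↦ (Function.update_of_ne hj _ _).symm
  have heval := (iIndepFun_pi (μ := ν) (X := fun _ ↦ id) fun _ ↦ aemeasurable_id).iIndep
  refine (IndepFun_iff_Indep _ _ _).2 <| indep_of_indep_of_le_left (indep_of_indep_of_le_right
    (indep_iSup_of_disjoint (fun j ↦ (measurable_pi_apply j).comap_le) heval
      (S := {i}ᶜ) (T := {i}) disjoint_compl_left) ?_) ?_
  · simp
  · rw [hFu]
    exact (hF.comp hupdate).comap_le

lemma integral_comp_eval_eq_zero_of_dependsOn [Fintype ι] {E : ι → Type*} {β : Type*}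
    [MeasurableSpace β] [∀ i, MeasurableSpace (E i)] (ν : ∀ i, Measure (E i))
    [∀ i, IsProbabilityMeasure (ν i)] {F : (∀ i, E i) → β} (hF : Measurable F) {i : ι}
    (hFi : DependsOn F {i}ᶜ) {g : β → E i → ℝ} (hg : Measurable (Function.uncurry g))
    (hgF : Integrable (fun x ↦ g (F x) (x i)) (Measure.pi ν)) (hg0 : ∀ b, ∫ e, g b e ∂ν i = 0) :
    ∫ x, g (F x) (x i) ∂Measure.pi ν = 0 := by
  have heval : Measurable fun x : ∀ i, E i ↦ x i := measurable_pi_apply i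
  have hmap : (Measure.pi ν).map (fun x ↦ (F x, x i)) = ((Measure.pi ν).map F).prod (ν i) := by
    rw [(indepFun_iff_map_prod_eq_prod_map_map hF.aemeasurable heval.aemeasurable).1
      (indepFun_eval_of_dependsOn ν hF hFi), (measurePreserving_eval ν i).map_eq]
  have hint : Integrable (Function.uncurry g) (((Measure.pi ν).map F).prod (ν i)) := by
    rw [← hmap, integrable_map_measure hg.aestronglyMeasurable (hF.prodMk heval).aemeasurable]
    exact hgF
  calc ∫ x, g (F x) (x i) ∂Measure.pi ν
      = ∫ z, Function.uncurry g z ∂((Measure.pi ν).map F).prod (ν i) := by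
        rw [← hmap, integral_map (hF.prodMk heval).aemeasurable hg.aestronglyMeasurable]; rfl
    _ = ∫ b, ∫ e, g b e ∂ν i ∂(Measure.pi ν).map F := integral_prod _ hint
    _ = 0 := by simp only [hg0, integral_zero]

end Independence

section Rademacher

variable {Ω ι κ : Type*} [MeasurableSpace Ω] {μ : Measure Ω} {ε : ι → Ω → ℝ}

/-- Families of independent random signs, each equal to `1` or `-1` with probability `1/2`. -/
structure IsRademacherFamily (ε : ι → Ω → ℝ) (μ : Measure Ω) : Prop where
  measurable : ∀ i, Measurable (ε i)
  indep : iIndepFun ε μ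
  eq_one_or_neg_one : ∀ i ω, ε i ω = 1 ∨ ε i ω = -1
  integral_eq_zero : ∀ i, ∫ ω, ε i ω ∂μ = 0

namespace IsRademacherFamily

variable (hε : IsRademacherFamily ε μ)

include hε

lemma measurable_sum (s : Finset ι) : Measurable fun ω ↦ ∑ i ∈ s, ε i ω :=
  Finset.measurable_fun_sum s fun i _ ↦ hε.measurable i

lemma abs_eq_one (i : ι) (ω : Ω) : |ε i ω| = 1 := by
  rcases hε.eq_one_or_neg_one i ω with h | h <;> simp [h]

lemma sq_eq_one (i : ι) (ω : Ω) : ε i ω ^ 2 = 1 := by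
  rw [← sq_abs, hε.abs_eq_one, one_pow]

lemma abs_sum_le (s : Finset ι) (ω : Ω) : |∑ i ∈ s, ε i ω| ≤ s.card :=
  (Finset.abs_sum_le_sum_abs _ _).trans (by simp [hε.abs_eq_one])

lemma integrable_sum_pow (s : Finset ι) (k : ℕ) :
    Integrable (fun ω ↦ (∑ i ∈ s, ε i ω) ^ k) μ := by
  have := hε.indep.isProbabilityMeasure
  refine .of_bound ((hε.measurable_sum s).pow_const k).aestronglyMeasurable
    ((s.card : ℝ) ^ k) (.of_forall fun ω ↦ ?_)
  rw [norm_pow, norm_eq_abs]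
  exact pow_le_pow_left₀ (abs_nonneg _) (hε.abs_sum_le s ω) k

lemma integrable_sum_pow_mul (s : Finset ι) (i : ι) (k : ℕ) :
    Integrable (fun ω ↦ (∑ j ∈ s, ε j ω) ^ k * ε i ω) μ :=
  (hε.integrable_sum_pow s k).mul_bdd (c := 1) (hε.measurable i).aestronglyMeasurable
    (.of_forall fun ω ↦ (hε.abs_eq_one i ω).le)

lemma integral_sum_pow_mul {s : Finset ι} {i : ι} (hi : i ∉ s) (k : ℕ) :
    ∫ ω, (∑ j ∈ s, ε j ω) ^ k * ε i ω ∂μ = 0 := by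
  have hind : IndepFun (fun ω ↦ (∑ j ∈ s, ε j ω) ^ k) (ε i) μ := by
    simpa [Function.comp_def] using (indepFun_sum_of_disjoint hε.indep hε.measurable
      (Finset.disjoint_singleton_right.2 hi)).comp (measurable_id.pow_const k) measurable_id
  rw [hind.integral_fun_mul_eq_mul_integral (hε.integrable_sum_pow s k).aestronglyMeasurable
    (hε.measurable i).aestronglyMeasurable, hε.integral_eq_zero, mul_zero]

lemma integral_sum (s : Finset ι) : ∫ ω, ∑ i ∈ s, ε i ω ∂μ = 0 := by
  rw [integral_finsetSum _ fun i _ ↦ by simpa using hε.integrable_sum_pow {i} 1]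
  exact Finset.sum_eq_zero fun i _ ↦ hε.integral_eq_zero i

lemma integral_sum_sq (s : Finset ι) : ∫ ω, (∑ i ∈ s, ε i ω) ^ 2 ∂μ = s.card := by
  classical
  have := hε.indep.isProbabilityMeasure
  induction s using Finset.induction_on with
  | empty => simp
  | insert i s hi ih =>
    have hexpand (ω : Ω) : (∑ j ∈ insert i s, ε j ω) ^ 2
        = (∑ j ∈ s, ε j ω) ^ 2 + 2 * ((∑ j ∈ s, ε j ω) ^ 1 * ε i ω) + 1 := by
      rw [Finset.sum_insert hi, ← hε.sq_eq_one i ω]; ring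
    have h2 := hε.integrable_sum_pow s 2
    have h1 := hε.integrable_sum_pow_mul s i 1
    simp_rw [hexpand]
    rw [integral_add (by fun_prop) (by fun_prop), integral_add (by fun_prop) (by fun_prop),
      integral_const_mul, ih, hε.integral_sum_pow_mul hi, Finset.card_insert_of_notMem hi]
    simp

lemma integral_sum_pow_four (s : Finset ι) :
    ∫ ω, (∑ i ∈ s, ε i ω) ^ 4 ∂μ = 3 * (s.card : ℝ) ^ 2 - 2 * s.card := by
  classical
  have := hε.indep.isProbabilityMeasure
  induction s using Finset.induction_on with
  | empty => simp
  | insert i s hi ih =>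
    have hexpand (ω : Ω) : (∑ j ∈ insert i s, ε j ω) ^ 4
        = (∑ j ∈ s, ε j ω) ^ 4 + 4 * ((∑ j ∈ s, ε j ω) ^ 3 * ε i ω)
          + 6 * (∑ j ∈ s, ε j ω) ^ 2 + 4 * ((∑ j ∈ s, ε j ω) ^ 1 * ε i ω) + 1 := by
      rw [Finset.sum_insert hi]
      linear_combination (6 * (∑ j ∈ s, ε j ω) ^ 2 + 4 * (∑ j ∈ s, ε j ω) * ε i ω
        + ε i ω ^ 2 + 1) * hε.sq_eq_one i ω
    have h4 := hε.integrable_sum_pow s 4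
    have h3 := hε.integrable_sum_pow_mul s i 3
    have h2 := hε.integrable_sum_pow s 2
    have h1 := hε.integrable_sum_pow_mul s i 1
    simp_rw [hexpand]
    rw [integral_add (by fun_prop) (by fun_prop), integral_add (by fun_prop) (by fun_prop),
      integral_add (by fun_prop) (by fun_prop), integral_add (by fun_prop) (by fun_prop),
      integral_const_mul, integral_const_mul, integral_const_mul, ih, hε.integral_sum_sq,
      hε.integral_sum_pow_mul hi, hε.integral_sum_pow_mul hi, Finset.card_insert_of_notMem hi]
    simp
    ring

end IsRademacherFamily

lemma quartic_le_indicator (y : ℝ) :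
    3.1 * y + 4 * y ^ 2 - y ^ 4 - 1 / 2 ≤ (Set.Ici (1 / 8)).indicator (fun _ ↦ (9 : ℝ)) y := by
  by_cases hy : 1 / 8 ≤ y
  · rw [Set.indicator_of_mem (Set.mem_Ici.2 hy)]
    nlinarith [sq_nonneg (y ^ 2 - 2.5), sq_nonneg (y - 1.6)]
  · rw [Set.indicator_of_notMem (Set.mem_Ici.not.2 hy)]
    push Not at hy
    nlinarith [sq_nonneg (y ^ 2 - 1.3), sq_nonneg (y + 1.15), mul_nonneg (sub_nonneg.2 hy.le)
      (sq_nonneg (y + 1.15)), sq_nonneg (y * (y + 1.15)), sq_nonneg (y ^ 2 + y / 2 - 0.7)]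

/- A quartic test polynomial in place of Paley–Zygmund: its linear term makes the bound one-sided
although only the moments of order 1, 2 and 4 enter. -/
lemma one_div_eighteen_le_measureReal [IsProbabilityMeasure μ] {Y : Ω → ℝ} (hY : Measurable Y)
    (hY4 : MemLp Y 4 μ) (h1 : ∫ ω, Y ω ∂μ = 0) (h2 : ∫ ω, Y ω ^ 2 ∂μ = 1)
    (h4 : ∫ ω, Y ω ^ 4 ∂μ ≤ 3) : 1 / 18 ≤ μ.real {ω | 1 / 8 ≤ Y ω} := by
  have hi1 : Integrable Y μ := hY4.integrable (by norm_num)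
  have hi2 : Integrable (fun ω ↦ Y ω ^ 2) μ := (hY4.mono_exponent (by norm_num)).integrable_sq
  have hi4 : Integrable (fun ω ↦ Y ω ^ 4) μ := by
    simpa [Even.pow_abs (by decide : Even 4)] using hY4.integrable_norm_pow (p := 4) (by norm_num)
  have hset : MeasurableSet {ω | 1 / 8 ≤ Y ω} := measurableSet_le measurable_const hY
  have hle : ∫ ω, (3.1 * Y ω + 4 * Y ω ^ 2 - Y ω ^ 4 - 1 / 2) ∂μ
      ≤ ∫ ω, {ω | 1 / 8 ≤ Y ω}.indicator (fun _ ↦ (9 : ℝ)) ω ∂μ :=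
    integral_mono (by fun_prop) ((integrable_const _).indicator hset)
      fun ω ↦ quartic_le_indicator (Y ω)
  rw [integral_indicator_const _ hset, integral_sub (by fun_prop) (by fun_prop),
    integral_sub (by fun_prop) (by fun_prop), integral_add (by fun_prop) (by fun_prop),
    integral_const_mul, integral_const_mul, h1, h2] at hle
  simp only [integral_const, probReal_univ, smul_eq_mul] at hle
  linarith

namespace IsRademacherFamily

variable (hε : IsRademacherFamily ε μ)

include hε

lemma one_div_eighteen_le_measureReal_sum {s : Finset ι} (hs : s.Nonempty) :
    1 / 18 ≤ μ.real {ω | √s.card / 8 ≤ ∑ i ∈ s, ε i ω} := by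
  have := hε.indep.isProbabilityMeasure
  have hcard : (0 : ℝ) < s.card := by exact_mod_cast hs.card_pos
  have hsqrt : 0 < √(s.card : ℝ) := sqrt_pos.2 hcard
  have hsq : √(s.card : ℝ) ^ 2 = s.card := sq_sqrt hcard.le
  have hset : {ω | √s.card / 8 ≤ ∑ i ∈ s, ε i ω}
      = {ω | 1 / 8 ≤ (∑ i ∈ s, ε i ω) / √s.card} := by
    ext ω
    simp only [Set.mem_ofPred_eq]
    rw [le_div_iff₀ hsqrt, one_div_mul_eq_div]
  rw [hset]
  refine one_div_eighteen_le_measureReal ((hε.measurable_sum s).div_const _) ?_ ?_ ?_ ?_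
  · exact .of_bound ((hε.measurable_sum s).div_const _).aestronglyMeasurable (s.card / √s.card)
      (.of_forall fun ω ↦ by
        rw [norm_eq_abs, abs_div, abs_of_pos hsqrt]; gcongr; exact hε.abs_sum_le s ω)
  · rw [integral_div, hε.integral_sum, zero_div]
  · simp_rw [div_pow]
    rw [integral_div, hε.integral_sum_sq, hsq, div_self hcard.ne']
  · simp_rw [div_pow]
    rw [integral_div, hε.integral_sum_pow_four, show (4 : ℕ) = 2 * 2 from rfl, pow_mul, hsq,
      div_le_iff₀ (by positivity)]
    linarith

lemma mul_le_measureReal_sum {s u : Finset ι} (hsu : Disjoint s u) {x y p q : ℝ}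
    (hq : 0 ≤ q) (hpx : p ≤ μ.real {ω | x ≤ ∑ i ∈ s, ε i ω})
    (hqy : q ≤ μ.real {ω | y ≤ ∑ i ∈ u, ε i ω}) :
    p * q ≤ μ.real {ω | x + y ≤ ∑ i ∈ s.disjUnion u hsu, ε i ω} := by
  have := hε.indep.isProbabilityMeasure
  have hmul := (indepFun_sum_of_disjoint hε.indep hε.measurable hsu).measure_inter_preimage_eq_mul
    (Set.Ici x) (Set.Ici y) measurableSet_Ici measurableSet_Ici
  calc p * q ≤ μ.real {ω | x ≤ ∑ i ∈ s, ε i ω} * μ.real {ω | y ≤ ∑ i ∈ u, ε i ω} :=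
        mul_le_mul hpx hqy hq measureReal_nonneg
    _ = μ.real ({ω | x ≤ ∑ i ∈ s, ε i ω} ∩ {ω | y ≤ ∑ i ∈ u, ε i ω}) := by
        simp only [Measure.real, ← ENNReal.toReal_mul]
        exact (congrArg ENNReal.toReal hmul).symm
    _ ≤ μ.real {ω | x + y ≤ ∑ i ∈ s.disjUnion u hsu, ε i ω} := by
        refine measureReal_mono fun ω hω ↦ ?_
        simp only [Set.mem_ofPred_eq, Finset.sum_disjUnion]
        exact add_le_add hω.1 hω.2

lemma pow_le_measureReal_sum {b q : ℕ} (hb : 0 < b) (hq : 1 ≤ q) {s : Finset ι}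
    (hs : q * b ≤ s.card) :
    (1 / 18 : ℝ) ^ q ≤ μ.real {ω | q * (√b / 8) ≤ ∑ i ∈ s, ε i ω} := by
  classical
  have := hε.indep.isProbabilityMeasure
  induction q, hq using Nat.le_induction generalizing s with
  | base =>
    rw [one_mul] at hs
    rw [pow_one]
    refine (hε.one_div_eighteen_le_measureReal_sum
      (Finset.card_pos.1 (hb.trans_le hs))).trans (measureReal_mono fun ω hω ↦ ?_)
    simp only [Set.mem_ofPred_eq, Nat.cast_one, one_mul] at hω ⊢
    refine le_trans ?_ hω
    gcongr
  | succ q _ ih =>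
    rw [add_one_mul] at hs
    obtain ⟨u, hus, hu⟩ := Finset.exists_subset_card_eq (show b ≤ s.card by omega)
    have hrest : q * b ≤ (s \ u).card := by rw [Finset.card_sdiff_of_subset hus]; omega
    have hblock := hε.one_div_eighteen_le_measureReal_sum (Finset.card_pos.1 (hu ▸ hb))
    have := hε.mul_le_measureReal_sum Finset.sdiff_disjoint (by positivity) (ih hrest) hblock
    rw [Finset.disjUnion_eq_union, Finset.sdiff_union_of_subset hus, hu, ← pow_succ] at this
    rwa [Nat.cast_add_one, add_one_mul]

lemma one_sub_pow_le_measureReal_exists_sum {S : κ → Finset ι}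
    (hS : Pairwise (Function.onFun Disjoint S)) (A : Finset κ) {t p : ℝ}
    (hp : ∀ k ∈ A, p ≤ μ.real {ω | t ≤ ∑ i ∈ S k, ε i ω}) :
    1 - (1 - p) ^ A.card ≤ μ.real {ω | ∃ k ∈ A, t ≤ ∑ i ∈ S k, ε i ω} :=
  one_sub_pow_le_measureReal_exists_le
    (iIndepFun_sum_of_pairwise_disjoint hε.indep hε.measurable hS)
    (fun k ↦ hε.measurable_sum (S k)) A hp

end IsRademacherFamily

end Rademacher

section Covers

variable {ι : Type*}

lemma prod_sub_prod_le_sum_sub (s : Finset ι) {w z : ι → ℝ} (hw : 0 ≤ w) (hwz : w ≤ z)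
    (hz : z ≤ 1) : ∏ i ∈ s, z i - ∏ i ∈ s, w i ≤ ∑ i ∈ s, (z i - w i) := by
  classical
  induction s using Finset.induction_on with
  | empty => simp
  | insert a s ha ih =>
    simp only [Finset.prod_insert ha, Finset.sum_insert ha]
    have hprod_le : ∏ i ∈ s, w i ≤ ∏ i ∈ s, z i :=
      Finset.prod_le_prod (fun i _ ↦ hw i) fun i _ ↦ hwz i
    have hprod_le_one : ∏ i ∈ s, z i ≤ 1 :=
      Finset.prod_le_one (fun i _ ↦ (hw i).trans (hwz i)) fun i _ ↦ hz i
    calc z a * ∏ i ∈ s, z i - w a * ∏ i ∈ s, w i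
        = (z a - w a) * ∏ i ∈ s, z i + w a * (∏ i ∈ s, z i - ∏ i ∈ s, w i) := by ring
      _ ≤ (z a - w a) * 1 + 1 * (∏ i ∈ s, z i - ∏ i ∈ s, w i) :=
          add_le_add (mul_le_mul_of_nonneg_left hprod_le_one (sub_nonneg.2 (hwz a)))
            (mul_le_mul_of_nonneg_right ((hwz a).trans (hz a)) (sub_nonneg.2 hprod_le))
      _ ≤ (z a - w a) + ∑ i ∈ s, (z i - w i) := by linarith

lemma sum_range_exp_neg_pow_le {s : ℝ} (hs : 0 < s) (n : ℕ) :
    ∑ j ∈ Finset.range n, exp (-s) ^ j ≤ 1 + 1 / s := by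
  have hlt : exp (-s) < 1 := exp_lt_one_iff.2 (neg_neg_of_pos hs)
  refine ((summable_geometric_of_lt_one (exp_pos _).le hlt).sum_le_tsum _
    fun j _ ↦ by positivity).trans ?_
  rw [tsum_geometric_of_lt_one (exp_pos _).le hlt, inv_le_comm₀ (sub_pos.2 hlt) (by positivity)]
  have hexp : exp (-s) ≤ (1 + s)⁻¹ := by
    rw [exp_neg]
    exact inv_anti₀ (by positivity) (by linarith [add_one_le_exp s])
  calc (1 + 1 / s)⁻¹ = 1 - (1 + s)⁻¹ := by field_simp; ring
    _ ≤ 1 - exp (-s) := by linarith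

/-- The point with coordinates `exp (-η) ^ k i`; its anchored box has volume
`exp (-η) ^ ∑ i, k i`, so that volumes of boxes depend on `∑ i, k i` only. -/
def expPoint (η : ℝ) (k : ι → ℕ) : ι → ℝ := fun i ↦ exp (-(η * k i))

lemma expPoint_mem_Icc {η : ℝ} (hη : 0 ≤ η) (k : ι → ℕ) : expPoint η k ∈ Set.Icc 0 1 :=
  ⟨fun _ ↦ (exp_pos _).le, fun i ↦ exp_le_one_iff.2 (neg_nonpos.2 (by positivity))⟩

lemma expPoint_le_expPoint {η : ℝ} (hη : 0 ≤ η) {k l : ι → ℕ} (hkl : k ≤ l) :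
    expPoint η l ≤ expPoint η k := fun i ↦ by
  have : (k i : ℝ) ≤ l i := by exact_mod_cast hkl i
  exact exp_le_exp.2 (neg_le_neg (by gcongr))

lemma exists_expPoint_bracket {η : ℝ} (hη : 0 < η) {y : ι → ℝ} (hy : ∀ i, 0 < y i)
    (hy1 : y ≤ 1) : ∃ k : ι → ℕ, expPoint η (k + 1) ≤ y ∧ y ≤ expPoint η k := by
  have hlog (i : ι) : 0 ≤ -log (y i) / η :=
    div_nonneg (neg_nonneg.2 (log_nonpos (hy i).le (hy1 i))) hη.le
  refine ⟨fun i ↦ ⌊-log (y i) / η⌋₊, fun i ↦ ?_, fun i ↦ ?_⟩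
  · have := (div_lt_iff₀ hη).1 (Nat.lt_floor_add_one (-log (y i) / η))
    rw [expPoint, ← le_log_iff_exp_le (hy i)]
    simp only [Pi.add_apply, Pi.one_apply, Nat.cast_add, Nat.cast_one]
    linarith
  · have := (le_div_iff₀ hη).1 (Nat.floor_le (hlog i))
    rw [expPoint, ← log_le_iff_le_exp (hy i)]
    linarith

variable [Fintype ι]

lemma exists_le_sum_eq (k : ι → ℕ) {M : ℕ} (h : M ≤ ∑ i, k i) :
    ∃ k' ≤ k, ∑ i, k' i = M := by
  classical
  induction M with
  | zero => exact ⟨0, fun i ↦ Nat.zero_le _, by simp⟩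
  | succ M ih =>
    obtain ⟨k', hk', hsum⟩ := ih (by omega)
    obtain ⟨i, hi⟩ : ∃ i, k' i < k i := by
      by_contra! hge
      have := Finset.sum_le_sum fun i (_ : i ∈ Finset.univ) ↦ hge i
      omega
    refine ⟨k' + Pi.single i 1, fun j ↦ ?_, by simp [Finset.sum_add_distrib, hsum]⟩
    obtain rfl | hj := eq_or_ne j i
    · simpa using hi
    · simpa [hj] using hk' j

open scoped Classical in
/-- The lattice points `k : ι → ℕ` of the simplex `∑ i, k i ≤ T`, as a finite set. -/
def simplexLattice (ι : Type*) [Fintype ι] (T : ℕ) : Finset (ι → ℕ) :=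
  (Fintype.piFinset fun _ ↦ Finset.range (T + 1)).filter fun k ↦ ∑ i, k i ≤ T

lemma mem_simplexLattice {T : ℕ} {k : ι → ℕ} : k ∈ simplexLattice ι T ↔ ∑ i, k i ≤ T := by
  classical
  refine ⟨fun hk ↦ (Finset.mem_filter.1 hk).2, fun hk ↦ Finset.mem_filter.2 ⟨?_, hk⟩⟩
  refine Fintype.mem_piFinset.2 fun i ↦ Finset.mem_range_succ_iff.2 (le_trans ?_ hk)
  exact Finset.single_le_sum (fun j _ ↦ Nat.zero_le (k j)) (Finset.mem_univ i)

-- Exponential weights: `1 ≤ exp (s * (T - ∑ i, k i))` on the simplex, and this weight factors.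
lemma card_simplexLattice_le (T : ℕ) {s : ℝ} (hs : 0 < s) :
    ((simplexLattice ι T).card : ℝ) ≤ exp (s * T) * (1 + 1 / s) ^ Fintype.card ι := by
  classical
  have hweight : ∀ k ∈ simplexLattice ι T, (1 : ℝ) ≤ exp (s * T) * ∏ i, exp (-s) ^ k i := by
    intro k hk
    have hle : ((∑ i, k i : ℕ) : ℝ) ≤ T := by exact_mod_cast mem_simplexLattice.1 hk
    rw [Finset.prod_pow_eq_pow_sum, ← exp_nat_mul, ← exp_add]
    exact one_le_exp (by nlinarith)
  calc ((simplexLattice ι T).card : ℝ)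
      ≤ ∑ k ∈ simplexLattice ι T, exp (s * T) * ∏ i, exp (-s) ^ k i := by
        simpa using Finset.sum_le_sum hweight
    _ ≤ ∑ k ∈ Fintype.piFinset fun _ ↦ Finset.range (T + 1),
          exp (s * T) * ∏ i, exp (-s) ^ k i :=
        Finset.sum_le_sum_of_subset_of_nonneg (Finset.filter_subset _ _)
          fun k _ _ ↦ by positivity
    _ = exp (s * T) * (∑ j ∈ Finset.range (T + 1), exp (-s) ^ j) ^ Fintype.card ι := by
        rw [← Finset.mul_sum,
          Finset.sum_prod_piFinset (Finset.range (T + 1)) fun _ j ↦ exp (-s) ^ j]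
        simp
    _ ≤ exp (s * T) * (1 + 1 / s) ^ Fintype.card ι := by
        gcongr
        exact sum_range_exp_neg_pow_le hs _

/-- A `δ`-bracketing cover of the anchored boxes in the unit cube: every corner `y` lies between
two points of `F` whose boxes differ in volume by at most `δ`. -/
structure IsBracketingCover (F : Finset (ι → ℝ)) (δ : ℝ) : Prop where
  mem_Icc : ∀ z ∈ F, z ∈ Set.Icc 0 1
  exists_bracket : ∀ y ∈ Set.Icc (0 : ι → ℝ) 1,
    ∃ a ∈ F, ∃ b ∈ F, a ≤ y ∧ y ≤ b ∧ ∏ i, b i - ∏ i, a i ≤ δ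

lemma prod_expPoint (η : ℝ) (k : ι → ℕ) :
    ∏ i, expPoint η k i = exp (-(η * (∑ i, k i : ℕ))) := by
  simp only [expPoint, ← exp_sum, Finset.sum_neg_distrib, ← Finset.mul_sum, Nat.cast_sum]

lemma prod_expPoint_sub_prod_expPoint_succ_le {η : ℝ} (hη : 0 ≤ η) (k : ι → ℕ) :
    ∏ i, expPoint η k i - ∏ i, expPoint η (k + 1) i ≤ Fintype.card ι * η := by
  have hvol : 0 ≤ η * (∑ i, k i : ℕ) := by positivity
  have hsum : ∑ i, (k + 1) i = ∑ i, k i + Fintype.card ι := by simp [Finset.sum_add_distrib]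
  calc ∏ i, expPoint η k i - ∏ i, expPoint η (k + 1) i
      = exp (-(η * (∑ i, k i : ℕ))) * (1 - exp (-(Fintype.card ι * η))) := by
        rw [prod_expPoint, prod_expPoint, hsum, mul_sub, mul_one, ← exp_add]
        push_cast
        ring_nf
    _ ≤ 1 * (Fintype.card ι * η) := by
        gcongr
        · exact sub_nonneg.2 (exp_le_one_iff.2 (neg_nonpos.2 (by positivity)))
        · exact exp_le_one_iff.2 (neg_nonpos.2 hvol)
        · linarith [one_sub_le_exp_neg (Fintype.card ι * η)]
    _ = Fintype.card ι * η := one_mul _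

open scoped Classical in
/-- The origin and the points `expPoint η k` with `∑ i, k i ≤ T`. -/
def expCover (ι : Type*) [Fintype ι] (η : ℝ) (T : ℕ) : Finset (ι → ℝ) :=
  insert 0 ((simplexLattice ι T).image (expPoint η))

lemma zero_mem_expCover (η : ℝ) (T : ℕ) : 0 ∈ expCover ι η T := Finset.mem_insert_self _ _

lemma expPoint_mem_expCover (η : ℝ) {T : ℕ} {k : ι → ℕ} (hk : ∑ i, k i ≤ T) :
    expPoint η k ∈ expCover ι η T :=
  Finset.mem_insert_of_mem (Finset.mem_image_of_mem _ (mem_simplexLattice.2 hk))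

-- A corner whose box has volume below `exp (-(η * M)) ≤ δ` is bracketed by the empty box and a
-- box of volume `exp (-(η * M))`, all others by neighbouring points of the exponential lattice.
lemma isBracketingCover_expCover [Nonempty ι] {δ η : ℝ} (hη : 0 < η)
    (hηδ : Fintype.card ι * η ≤ δ) {M : ℕ}
    (hM : exp (-(η * M)) ≤ δ) : IsBracketingCover (expCover ι η (M + Fintype.card ι)) δ where
  mem_Icc z hz := by
    obtain rfl | hz := Finset.mem_insert.1 hz
    · exact ⟨le_rfl, zero_le_one⟩
    · obtain ⟨k, -, rfl⟩ := Finset.mem_image.1 hz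
      exact expPoint_mem_Icc hη.le k
  exists_bracket y hy := by
    have zero_bracket (k : ι → ℕ) (hyk : y ≤ expPoint η k) (hk : M ≤ ∑ i, k i) :
        ∃ a ∈ expCover ι η (M + Fintype.card ι), ∃ b ∈ expCover ι η (M + Fintype.card ι),
          a ≤ y ∧ y ≤ b ∧ ∏ i, b i - ∏ i, a i ≤ δ := by
      obtain ⟨l, hlk, hl⟩ := exists_le_sum_eq k hk
      exact ⟨0, zero_mem_expCover _ _, expPoint η l, expPoint_mem_expCover _ (by omega), hy.1,
        hyk.trans (expPoint_le_expPoint hη.le hlk), by simpa [prod_expPoint, hl] using hM⟩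
    by_cases hpos : ∀ i, 0 < y i
    · obtain ⟨k, hky, hyk⟩ := exists_expPoint_bracket hη hpos hy.2
      obtain hk | hk := le_or_gt M (∑ i, k i)
      · exact zero_bracket k hyk hk
      have hsum : ∑ i, (k + 1) i = ∑ i, k i + Fintype.card ι := by
        simp [Finset.sum_add_distrib]
      exact ⟨expPoint η (k + 1), expPoint_mem_expCover _ (by omega), expPoint η k,
        expPoint_mem_expCover _ (by omega), hky, hyk,
        (prod_expPoint_sub_prod_expPoint_succ_le hη.le k).trans hηδ⟩
    · push Not at hpos
      obtain ⟨i, hi⟩ := hpos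
      classical
      refine zero_bracket (Pi.single i M) (fun j ↦ ?_) (by simp)
      obtain rfl | hj := eq_or_ne j i
      · exact hi.trans (exp_pos _).le
      · simpa [expPoint, hj] using hy.2 j

lemma card_simplexLattice_ceil_le [Nonempty ι] {δ : ℝ} (hδ : 0 < δ) (hδ1 : δ ≤ 1) :
    ((simplexLattice ι (⌈Fintype.card ι / δ ^ 2⌉₊ + Fintype.card ι)).card : ℝ)
      ≤ (exp (3 / 2) * (3 / δ ^ 2)) ^ Fintype.card ι := by
  set d := Fintype.card ι
  have hd : (1 : ℝ) ≤ d := by exact_mod_cast Fintype.card_pos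
  have hδ2 : δ ^ 2 ≤ 1 := pow_le_one₀ hδ.le hδ1
  have hT : δ ^ 2 / 2 * (⌈d / δ ^ 2⌉₊ + d : ℕ) ≤ d * (3 / 2) := by
    have hceil : δ ^ 2 * ⌈d / δ ^ 2⌉₊ ≤ d + δ ^ 2 := by
      calc δ ^ 2 * ⌈d / δ ^ 2⌉₊ ≤ δ ^ 2 * (d / δ ^ 2 + 1) := by
            gcongr; exact (Nat.ceil_lt_add_one (by positivity)).le
        _ = d + δ ^ 2 := by field_simp
    push_cast
    nlinarith
  have hweight : 1 + 1 / (δ ^ 2 / 2) ≤ 3 / δ ^ 2 := by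
    field_simp
    linarith
  calc _ ≤ exp (δ ^ 2 / 2 * (⌈d / δ ^ 2⌉₊ + d : ℕ)) * (1 + 1 / (δ ^ 2 / 2)) ^ d :=
        card_simplexLattice_le _ (by positivity)
    _ ≤ exp (d * (3 / 2)) * (3 / δ ^ 2) ^ d := by gcongr
    _ = (exp (3 / 2) * (3 / δ ^ 2)) ^ d := by rw [mul_pow, exp_nat_mul]

lemma two_mul_exp_mul_le_exp_add_log {δ : ℝ} (hδ : 0 < δ) :
    2 * (exp (3 / 2) * (3 / δ ^ 2)) ≤ exp (4 + 2 * log (1 / δ)) := by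
  have hlog : exp (2 * log (1 / δ)) = 1 / δ ^ 2 := by
    rw [two_mul, exp_add, exp_log (by positivity)]
    field_simp
  have hsix : (6 : ℝ) ≤ exp (5 / 2) := by
    linarith [quadratic_le_exp_of_nonneg (show (0 : ℝ) ≤ 5 / 2 by norm_num)]
  calc 2 * (exp (3 / 2) * (3 / δ ^ 2)) = exp (3 / 2) * 6 * (1 / δ ^ 2) := by ring
    _ ≤ exp (3 / 2) * exp (5 / 2) * (1 / δ ^ 2) := by gcongr
    _ = exp (4 + 2 * log (1 / δ)) := by rw [← exp_add, exp_add 4, hlog]; norm_num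

lemma card_expCover_le [Nonempty ι] {δ : ℝ} (hδ : 0 < δ) (hδ1 : δ ≤ 1) (η : ℝ) :
    ((expCover ι η (⌈Fintype.card ι / δ ^ 2⌉₊ + Fintype.card ι)).card : ℝ)
      ≤ exp (Fintype.card ι * (4 + 2 * log (1 / δ))) := by
  classical
  set d := Fintype.card ι
  have hone : (1 : ℝ) ≤ (exp (3 / 2) * (3 / δ ^ 2)) ^ d := by
    refine one_le_pow₀ (one_le_mul_of_one_le_of_one_le (one_le_exp (by positivity)) ?_)
    rw [one_le_div (by positivity)]
    linarith [pow_le_one₀ hδ.le hδ1 (n := 2)]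
  calc ((expCover ι η (⌈d / δ ^ 2⌉₊ + d)).card : ℝ)
      ≤ (simplexLattice ι (⌈d / δ ^ 2⌉₊ + d)).card + 1 := by
        exact_mod_cast (Finset.card_insert_le _ _).trans (by gcongr; exact Finset.card_image_le)
    _ ≤ 2 * (exp (3 / 2) * (3 / δ ^ 2)) ^ d := by
        linarith [card_simplexLattice_ceil_le (ι := ι) hδ hδ1]
    _ ≤ 2 ^ d * (exp (3 / 2) * (3 / δ ^ 2)) ^ d := by
        gcongr
        exact le_self_pow₀ (by norm_num) Fintype.card_ne_zero
    _ ≤ exp (d * (4 + 2 * log (1 / δ))) := by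
        rw [← mul_pow, exp_nat_mul]
        gcongr
        exact two_mul_exp_mul_le_exp_add_log hδ

lemma exists_isBracketingCover [Nonempty ι] {δ : ℝ} (hδ : 0 < δ) (hδ1 : δ ≤ 1) :
    ∃ F : Finset (ι → ℝ), IsBracketingCover F δ ∧
      (F.card : ℝ) ≤ exp (Fintype.card ι * (4 + 2 * log (1 / δ))) := by
  refine ⟨expCover ι (δ / Fintype.card ι) (⌈Fintype.card ι / δ ^ 2⌉₊ + Fintype.card ι),
    isBracketingCover_expCover (by positivity) (by field_simp; rfl) ?_, card_expCover_le hδ hδ1 _⟩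
  have hM : 1 / δ ≤ δ / Fintype.card ι * ⌈Fintype.card ι / δ ^ 2⌉₊ := by
    calc 1 / δ = δ / Fintype.card ι * (Fintype.card ι / δ ^ 2) := by field_simp
      _ ≤ _ := by gcongr; exact Nat.le_ceil _
  rw [exp_neg, inv_le_comm₀ (exp_pos _) hδ, ← one_div]
  linarith [add_one_le_exp (δ / Fintype.card ι * ⌈Fintype.card ι / δ ^ 2⌉₊)]

end Covers

section JitteredSampling

variable {m d : ℕ} {x : Fin d → Fin m} {A B : Set (Fin d → ℝ)} {a b c y : Fin d → ℝ}

/-- A placement of one point for every cube of the `m`-grid. -/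
abbrev JitterConfig (m d : ℕ) : Type := (Fin d → Fin m) → Fin d → ℝ

/-- The uniform distribution on the cube with index `x`. -/
def cubeMeasure (m d : ℕ) (x : Fin d → Fin m) : Measure (Fin d → ℝ) :=
  ((m : ENNReal) ^ d) • volume.restrict (jitterCube m d x)

lemma jitterMeasure_eq_pi (m d : ℕ) : jitterMeasure m d = Measure.pi (cubeMeasure m d) := rfl

lemma measurableSet_jitterCube : MeasurableSet (jitterCube m d x) :=
  .univ_pi fun _ ↦ measurableSet_Ico

lemma ae_mem_jitterCube : ∀ᵐ p ∂cubeMeasure m d x, p ∈ jitterCube m d x :=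
  Measure.ae_smul_measure (ae_restrict_mem measurableSet_jitterCube) _

lemma measurableSet_anchoredBox : MeasurableSet (anchoredBox d y) :=
  .univ_pi fun _ ↦ measurableSet_Ico

lemma anchoredBox_mono (hab : a ≤ b) : anchoredBox d a ⊆ anchoredBox d b :=
  Set.pi_mono fun i _ ↦ Set.Ico_subset_Ico_right (hab i)

lemma volume_jitterCube : volume (jitterCube m d x) = ENNReal.ofReal (1 / m) ^ d := by
  rw [jitterCube, Real.volume_pi_Ico]
  simp

lemma volume_real_anchoredBox (hy : 0 ≤ y) : volume.real (anchoredBox d y) = ∏ i, y i := by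
  rw [anchoredBox, measureReal_def, Real.volume_pi_Ico, ENNReal.toReal_prod]
  exact Finset.prod_congr rfl fun i _ ↦ by simpa using hy i

lemma volume_anchoredBox_ne_top : volume (anchoredBox d y) ≠ ⊤ := by
  rw [anchoredBox, Real.volume_pi_Ico]
  exact ENNReal.prod_ne_top fun i _ ↦ ENNReal.ofReal_ne_top

lemma volume_real_symmDiff_anchoredBox (ha : 0 ≤ a) (hab : a ≤ b) :
    volume.real (symmDiff (anchoredBox d a) (anchoredBox d b)) = ∏ i, b i - ∏ i, a i := by
  have hsub := anchoredBox_mono hab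
  rw [symmDiff_of_le hsub, ← volume_real_anchoredBox ha, ← volume_real_anchoredBox (ha.trans hab)]
  exact measureReal_sdiff hsub measurableSet_anchoredBox volume_anchoredBox_ne_top

lemma volume_real_symmDiff_anchoredBox_triangle :
    volume.real (symmDiff (anchoredBox d a) (anchoredBox d c)) ≤
      volume.real (symmDiff (anchoredBox d a) (anchoredBox d b)) +
        volume.real (symmDiff (anchoredBox d b) (anchoredBox d c)) := by
  have hfin (a b : Fin d → ℝ) : volume (symmDiff (anchoredBox d a) (anchoredBox d b)) ≠ ⊤ :=
    ne_top_of_le_ne_top (measure_union_ne_top volume_anchoredBox_ne_top volume_anchoredBox_ne_top)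
      (measure_mono symmDiff_le_sup)
  simp only [measureReal_def]
  rw [← ENNReal.toReal_add (hfin _ _) (hfin _ _)]
  exact ENNReal.toReal_mono (ENNReal.add_ne_top.2 ⟨hfin _ _, hfin _ _⟩) (measure_symmDiff_le _ _ _)

lemma jdisc_eq_sum_indicator_sub (P : JitterConfig m d) (A : Set (Fin d → ℝ)) :
    jdisc m d P A = ∑ x, A.indicator 1 (P x) - (m : ℝ) ^ d * volume.real A := by
  classical
  simp [jdisc, measureReal_def, Set.indicator_apply]

lemma jdisc_anchoredBox_le_add (P : JitterConfig m d) (ha : 0 ≤ a) (hab : a ≤ b) :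
    jdisc m d P (anchoredBox d a) ≤
      jdisc m d P (anchoredBox d b) + (m : ℝ) ^ d * (∏ i, b i - ∏ i, a i) := by
  have hsum : ∑ x, (anchoredBox d a).indicator (1 : (Fin d → ℝ) → ℝ) (P x) ≤
      ∑ x, (anchoredBox d b).indicator 1 (P x) :=
    Finset.sum_le_sum fun x _ ↦ Set.indicator_le_indicator_of_subset (anchoredBox_mono hab)
      (fun _ ↦ zero_le_one) _
  rw [jdisc_eq_sum_indicator_sub, jdisc_eq_sum_indicator_sub, volume_real_anchoredBox ha,
    volume_real_anchoredBox (ha.trans hab)]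
  linarith

lemma abs_jdisc_anchoredBox_le (P : JitterConfig m d) (hy : y ∈ Set.Icc 0 1) :
    |jdisc m d P (anchoredBox d y)| ≤ (m : ℝ) ^ d := by
  have hprod : ∏ i, y i ≤ 1 := Finset.prod_le_one (fun i _ ↦ hy.1 i) fun i _ ↦ hy.2 i
  have hprod0 : 0 ≤ ∏ i, y i := Finset.prod_nonneg fun i _ ↦ hy.1 i
  have hind (p : Fin d → ℝ) : (anchoredBox d y).indicator 1 p ∈ Set.Icc (0 : ℝ) 1 :=
    ⟨Set.indicator_nonneg (fun _ _ ↦ zero_le_one) p,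
      Set.indicator_le_self' (fun _ _ ↦ zero_le_one) p⟩
  have hsum : ∑ x, (anchoredBox d y).indicator (1 : (Fin d → ℝ) → ℝ) (P x) ≤ (m : ℝ) ^ d := by
    simpa using Finset.sum_le_card_nsmul Finset.univ _ 1 fun x _ ↦ (hind (P x)).2
  rw [jdisc_eq_sum_indicator_sub, volume_real_anchoredBox hy.1]
  exact abs_sub_le_of_nonneg_of_le (Finset.sum_nonneg fun x _ ↦ (hind (P x)).1) hsum
    (by positivity) (mul_le_of_le_one_right (by positivity) hprod)

section Cubes

variable [NeZero m]

lemma mem_jitterCube_iff {p : Fin d → ℝ} :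
    p ∈ jitterCube m d x ↔ ∀ i, (x i : ℝ) ≤ m * p i ∧ m * p i < x i + 1 := by
  have hm : (0 : ℝ) < m := by exact_mod_cast NeZero.pos m
  simp only [jitterCube, Set.mem_pi, Set.mem_univ, true_imp_iff, Set.mem_Ico]
  refine forall_congr' fun i ↦ ?_
  rw [div_le_iff₀ hm, ← add_div, lt_div_iff₀ hm, mul_comm]

lemma pairwise_disjoint_jitterCube : Pairwise (Function.onFun Disjoint (jitterCube m d)) := by
  intro x x' hxx'
  refine Set.disjoint_left.2 fun p hp hp' ↦ hxx' (funext fun i ↦ Fin.ext ?_)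
  have hi := mem_jitterCube_iff.1 hp i
  have hi' := mem_jitterCube_iff.1 hp' i
  have hlt : ((x i : ℕ) : ℝ) < (x' i : ℕ) + 1 := by linarith
  have hlt' : ((x' i : ℕ) : ℝ) < (x i : ℕ) + 1 := by linarith
  norm_cast at hlt hlt'
  omega

lemma exists_mem_jitterCube {p : Fin d → ℝ} (hp : p ∈ anchoredBox d 1) :
    ∃ x, p ∈ jitterCube m d x := by
  have hm : (0 : ℝ) < m := by exact_mod_cast NeZero.pos m
  have hp0 (i : Fin d) : 0 ≤ m * p i := mul_nonneg hm.le (hp i trivial).1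
  have hlt (i : Fin d) : ⌊m * p i⌋₊ < m :=
    (Nat.floor_lt (hp0 i)).2 (mul_lt_of_lt_one_right hm (hp i trivial).2)
  exact ⟨fun i ↦ ⟨⌊m * p i⌋₊, hlt i⟩,
    mem_jitterCube_iff.2 fun i ↦ ⟨Nat.floor_le (hp0 i), Nat.lt_floor_add_one _⟩⟩

instance : IsProbabilityMeasure (cubeMeasure m d x) where
  measure_univ := by
    have hm : (0 : ℝ) < m := by exact_mod_cast NeZero.pos m
    rw [cubeMeasure, Measure.smul_apply, Measure.restrict_apply_univ, volume_jitterCube,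
      smul_eq_mul, ← mul_pow, ← ENNReal.ofReal_natCast, ← ENNReal.ofReal_mul hm.le,
      mul_one_div_cancel hm.ne', ENNReal.ofReal_one, one_pow]

instance : IsProbabilityMeasure (jitterMeasure m d) := by
  rw [jitterMeasure_eq_pi]; infer_instance

lemma ae_forall_mem_jitterCube : ∀ᵐ P ∂jitterMeasure m d, ∀ x, P x ∈ jitterCube m d x :=
  ae_all_iff.2 fun x ↦
    (measurePreserving_eval (cubeMeasure m d) x).quasiMeasurePreserving.ae ae_mem_jitterCube

lemma sum_cubeMeasure_real (hA : MeasurableSet A) (hA1 : A ⊆ anchoredBox d 1) :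
    ∑ x, (cubeMeasure m d x).real A = (m : ℝ) ^ d * volume.real A := by
  have hcover : A = ⋃ x ∈ Finset.univ, A ∩ jitterCube m d x := by
    ext p
    simpa using fun hp ↦ exists_mem_jitterCube (hA1 hp)
  have hfin (x : Fin d → Fin m) : volume (A ∩ jitterCube m d x) ≠ ⊤ :=
    measure_ne_top_of_subset Set.inter_subset_right
      (by rw [volume_jitterCube]; exact ENNReal.pow_ne_top ENNReal.ofReal_ne_top)
  have hsum : volume.real A = ∑ x, volume.real (A ∩ jitterCube m d x) := by
    conv_lhs => rw [hcover]
    exact measureReal_biUnion_finset (fun x _ x' _ hxx' ↦ (pairwise_disjoint_jitterCube hxx').mono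
      Set.inter_subset_right Set.inter_subset_right)
      (fun x _ ↦ hA.inter measurableSet_jitterCube) fun x _ ↦ hfin x
  rw [hsum, Finset.mul_sum]
  refine Finset.sum_congr rfl fun x _ ↦ ?_
  simp [cubeMeasure, measureReal_def, Measure.restrict_apply hA]

end Cubes

/-- The contribution of a point `p` drawn from the cube with index `x` to the signed discrepancy
of `A`: the indicator of `A`, centered. -/
def cubeDisc (m d : ℕ) (A : Set (Fin d → ℝ)) (x : Fin d → Fin m) (p : Fin d → ℝ) : ℝ :=
  A.indicator 1 p - (cubeMeasure m d x).real A

lemma jdisc_eq_sum_cubeDisc [NeZero m] (P : JitterConfig m d) (hA : MeasurableSet A)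
    (hA1 : A ⊆ anchoredBox d 1) : jdisc m d P A = ∑ x, cubeDisc m d A x (P x) := by
  simp only [jdisc_eq_sum_indicator_sub, cubeDisc, Finset.sum_sub_distrib,
    sum_cubeMeasure_real hA hA1]

lemma cubeDisc_congr (hAB : ∀ p ∈ jitterCube m d x, p ∈ A ↔ p ∈ B) {p : Fin d → ℝ}
    (hp : p ∈ jitterCube m d x) : cubeDisc m d A x p = cubeDisc m d B x p := by
  have hmeas : cubeMeasure m d x A = cubeMeasure m d x B :=
    measure_congr (by filter_upwards [ae_mem_jitterCube] with p hp using propext (hAB p hp))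
  classical
  simp [cubeDisc, measureReal_def, hmeas, Set.indicator_apply, hAB p hp]

lemma cubeDisc_eq_zero_of_forall_notMem (hA : ∀ p ∈ jitterCube m d x, p ∉ A) {p : Fin d → ℝ}
    (hp : p ∈ jitterCube m d x) : cubeDisc m d A x p = 0 := by
  rw [cubeDisc_congr (B := ∅) (by simpa using hA) hp]
  simp [cubeDisc]

lemma measurable_cubeDisc (hA : MeasurableSet A) : Measurable (cubeDisc m d A x) :=
  (measurable_one.indicator hA).sub_const _

variable [NeZero m]

lemma measurable_jdisc (hA : MeasurableSet A) (hA1 : A ⊆ anchoredBox d 1) :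
    Measurable fun P ↦ jdisc m d P A := by
  simp_rw [jdisc_eq_sum_cubeDisc _ hA hA1]
  exact Finset.measurable_fun_sum _ fun x _ ↦
    (measurable_cubeDisc hA).comp (measurable_pi_apply x)

lemma integral_cubeDisc (hA : MeasurableSet A) :
    ∫ p, cubeDisc m d A x p ∂cubeMeasure m d x = 0 := by
  have hint : Integrable (A.indicator (1 : (Fin d → ℝ) → ℝ)) (cubeMeasure m d x) :=
    (integrable_const (1 : ℝ)).indicator hA
  simp [cubeDisc, integral_sub hint, integral_indicator_one hA]

lemma abs_cubeDisc_le_one {p : Fin d → ℝ} : |cubeDisc m d A x p| ≤ 1 :=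
  abs_sub_le_of_nonneg_of_le (Set.indicator_nonneg (fun _ _ ↦ zero_le_one) p)
    (Set.indicator_le_self' (fun _ _ ↦ zero_le_one) p) measureReal_nonneg measureReal_le_one

lemma cubeDisc_eq_zero_of_forall_mem (hA : ∀ p ∈ jitterCube m d x, p ∈ A) {p : Fin d → ℝ}
    (hp : p ∈ jitterCube m d x) : cubeDisc m d A x p = 0 := by
  rw [cubeDisc_congr (B := .univ) (by simpa using hA) hp]
  simp [cubeDisc]

-- The centered variable is the difference of two indicators, whose square is the indicator of the
-- symmetric difference.
lemma hasSubexponentialMGF_cubeDisc_sub (hA : MeasurableSet A) (hB : MeasurableSet B) :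
    HasSubexponentialMGF (cubeDisc m d A x - cubeDisc m d B x)
      ((cubeMeasure m d x).real (symmDiff A B)) (cubeMeasure m d x) := by
  set f : (Fin d → ℝ) → ℝ := A.indicator 1 - B.indicator 1 with hf
  have hfm : Measurable f := (measurable_one.indicator hA).sub (measurable_one.indicator hB)
  have hf2 : f ^ 2 = (symmDiff A B).indicator 1 := by
    ext p
    by_cases hpA : p ∈ A <;> by_cases hpB : p ∈ B <;> simp [hf, hpA, hpB, Set.mem_symmDiff]
  have hf1 (p : Fin d → ℝ) : |f p| ≤ 1 := by
    by_cases hpA : p ∈ A <;> by_cases hpB : p ∈ B <;> simp [hf, hpA, hpB]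
  have hint : ∫ p, f p ∂cubeMeasure m d x
      = (cubeMeasure m d x).real A - (cubeMeasure m d x).real B := by
    rw [← integral_indicator_one hA, ← integral_indicator_one hB]
    exact integral_sub ((integrable_const (1 : ℝ)).indicator hA)
      ((integrable_const (1 : ℝ)).indicator hB)
  have h := HasSubexponentialMGF.sub_integral_of_abs_le_one (μ := cubeMeasure m d x)
    hfm.aemeasurable hf1
  rw [hf2, integral_indicator_one (hA.symmDiff hB), hint] at h
  convert h using 1
  funext p
  simp only [cubeDisc, hf, Pi.sub_apply]
  ring

lemma hasSubexponentialMGF_jdisc_sub (hA : MeasurableSet A) (hA1 : A ⊆ anchoredBox d 1)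
    (hB : MeasurableSet B) (hB1 : B ⊆ anchoredBox d 1) :
    HasSubexponentialMGF (fun P ↦ jdisc m d P A - jdisc m d P B)
      ((m : ℝ) ^ d * volume.real (symmDiff A B)) (jitterMeasure m d) := by
  have hmeas (x : Fin d → Fin m) : Measurable (cubeDisc m d A x - cubeDisc m d B x) :=
    (measurable_cubeDisc hA).sub (measurable_cubeDisc hB)
  have hAB1 : symmDiff A B ⊆ anchoredBox d 1 :=
    symmDiff_le_sup.trans (Set.union_subset hA1 hB1)
  have h := HasSubexponentialMGF.sum
    (iIndepFun_pi (μ := cubeMeasure m d) fun x ↦ (hmeas x).aemeasurable)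
    (fun x ↦ (hmeas x).comp (measurable_pi_apply x))
    (fun x ↦ (hasSubexponentialMGF_cubeDisc_sub hA hB).comp_measurePreserving
      (measurePreserving_eval (cubeMeasure m d) x)) Finset.univ
  rw [sum_cubeMeasure_real (hA.symmDiff hB) hAB1, ← jitterMeasure_eq_pi] at h
  convert h using 1
  funext P
  simp [jdisc_eq_sum_cubeDisc P hA hA1, jdisc_eq_sum_cubeDisc P hB hB1, Finset.sum_sub_distrib]

lemma mem_anchoredBox_grid_iff {k : Fin d → ℕ} {p : Fin d → ℝ} (hp : p ∈ jitterCube m d x) :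
    p ∈ anchoredBox d (fun i ↦ (k i : ℝ) / m) ↔ ∀ i, (x i : ℕ) < k i := by
  have hm : (0 : ℝ) < m := by exact_mod_cast NeZero.pos m
  simp only [anchoredBox, Set.mem_pi, Set.mem_univ, true_imp_iff, Set.mem_Ico]
  refine forall_congr' fun i ↦ ?_
  obtain ⟨hle, hlt⟩ := mem_jitterCube_iff.1 hp i
  have hx : (0 : ℝ) ≤ (x i : ℕ) := Nat.cast_nonneg _
  rw [lt_div_iff₀' hm]
  refine ⟨fun h ↦ ?_, fun h ↦ ⟨nonneg_of_mul_nonneg_right (hx.trans hle) hm, ?_⟩⟩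
  · exact_mod_cast hle.trans_lt h.2
  · have : ((x i : ℕ) : ℝ) + 1 ≤ k i := by exact_mod_cast h
    linarith

lemma jdisc_anchoredBox_grid_eq_zero {P : JitterConfig m d} (hP : ∀ x, P x ∈ jitterCube m d x)
    {k : Fin d → ℕ} (hk : ∀ i, k i ≤ m) :
    jdisc m d P (anchoredBox d fun i ↦ (k i : ℝ) / m) = 0 := by
  have hbox : anchoredBox d (fun i ↦ (k i : ℝ) / m) ⊆ anchoredBox d 1 :=
    anchoredBox_mono fun i ↦ div_le_one_of_le₀ (Nat.cast_le.2 (hk i)) m.cast_nonneg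
  rw [jdisc_eq_sum_cubeDisc P measurableSet_anchoredBox hbox]
  refine Finset.sum_eq_zero fun x _ ↦ ?_
  by_cases hx : ∀ i, (x i : ℕ) < k i
  · exact cubeDisc_eq_zero_of_forall_mem (fun p hp ↦ (mem_anchoredBox_grid_iff hp).2 hx) (hP x)
  · exact cubeDisc_eq_zero_of_forall_notMem
      (fun p hp hpA ↦ hx ((mem_anchoredBox_grid_iff hp).1 hpA)) (hP x)

end JitteredSampling

section Chaining

variable {m d : ℕ} {F G : Finset (Fin d → ℝ)} {a b y : Fin d → ℝ} {η : ℝ}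

/-- The oscillation of the discrepancy of a configuration over the pairs of corners from `F × G`
whose anchored boxes differ by a set of volume at most `η`. -/
def boxOscillation (m : ℕ) (F G : Finset (Fin d → ℝ)) (η : ℝ) (P : JitterConfig m d) : ℝ :=
  ⨆ q : {q : F × G // volume.real (symmDiff (anchoredBox d q.1) (anchoredBox d q.2)) ≤ η},
    |jdisc m d P (anchoredBox d q.1.1) - jdisc m d P (anchoredBox d q.1.2)|

lemma abs_jdisc_sub_le_boxOscillation (P : JitterConfig m d) (ha : a ∈ F) (hb : b ∈ G)
    (hab : volume.real (symmDiff (anchoredBox d a) (anchoredBox d b)) ≤ η) :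
    |jdisc m d P (anchoredBox d a) - jdisc m d P (anchoredBox d b)| ≤ boxOscillation m F G η P :=
  le_ciSup (f := fun q : {q : F × G //
      volume.real (symmDiff (anchoredBox d q.1) (anchoredBox d q.2)) ≤ η} ↦
    |jdisc m d P (anchoredBox d q.1.1) - jdisc m d P (anchoredBox d q.1.2)|)
    (Set.finite_range _).bddAbove ⟨(⟨a, ha⟩, ⟨b, hb⟩), hab⟩

section Expectation

variable [NeZero m]

lemma hasSubexponentialMGF_jdisc_anchoredBox_sub (ha : a ≤ 1) (hb : b ≤ 1)
    (hab : volume.real (symmDiff (anchoredBox d a) (anchoredBox d b)) ≤ η) :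
    HasSubexponentialMGF (fun P ↦ jdisc m d P (anchoredBox d a) - jdisc m d P (anchoredBox d b))
      ((m : ℝ) ^ d * η) (jitterMeasure m d) :=
  (hasSubexponentialMGF_jdisc_sub measurableSet_anchoredBox (anchoredBox_mono ha)
    measurableSet_anchoredBox (anchoredBox_mono hb)).mono (by gcongr)

lemma integrable_boxOscillation (hF : ∀ z ∈ F, z ≤ 1) (hG : ∀ z ∈ G, z ≤ 1) :
    Integrable (boxOscillation m F G η) (jitterMeasure m d) :=
  integrable_iSup_abs fun q ↦
    (hasSubexponentialMGF_jdisc_anchoredBox_sub (hF _ q.1.1.2) (hG _ q.1.2.2) q.2).integrable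

lemma integral_boxOscillation_le (hF : ∀ z ∈ F, z ≤ 1) (hG : ∀ z ∈ G, z ≤ 1) {ℓ : ℝ}
    (hℓ0 : 0 ≤ ℓ) (hℓ : 2 * ((F.card : ℝ) * G.card) ≤ exp ℓ) :
    ∫ P, boxOscillation m F G η P ∂jitterMeasure m d ≤
      2 * √((m : ℝ) ^ d * η * ℓ) + 2 * ℓ := by
  classical
  rcases isEmpty_or_nonempty {q : F × G //
    volume.real (symmDiff (anchoredBox d q.1) (anchoredBox d q.2)) ≤ η} with h | h
  · simp only [boxOscillation, Real.iSup_of_isEmpty, integral_zero]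
    positivity
  · refine integral_iSup_abs_le (fun q ↦
      hasSubexponentialMGF_jdisc_anchoredBox_sub (hF _ q.1.1.2) (hG _ q.1.2.2) q.2) ?_
    have hcard : Fintype.card {q : F × G //
        volume.real (symmDiff (anchoredBox d q.1) (anchoredBox d q.2)) ≤ η} ≤
        F.card * G.card := by
      simpa using Fintype.card_subtype_le (α := F × G) _
    refine le_trans ?_ hℓ
    gcongr
    exact_mod_cast hcard

end Expectation

/-- Rounding every coordinate down to a multiple of `1 / m`. -/
def gridFloor (m : ℕ) (z : Fin d → ℝ) : Fin d → ℝ := fun i ↦ (⌊(m : ℝ) * z i⌋₊ : ℝ) / m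

lemma gridFloor_nonneg (m : ℕ) (z : Fin d → ℝ) : 0 ≤ gridFloor m z :=
  fun i ↦ by simp only [gridFloor, Pi.zero_apply]; positivity

lemma abs_jdisc_anchoredBox_le_of_bracket (P : JitterConfig m d) (ha : 0 ≤ a) (hay : a ≤ y)
    (hyb : y ≤ b) (hab : ∏ i, b i - ∏ i, a i ≤ η) :
    |jdisc m d P (anchoredBox d y)| ≤ |jdisc m d P (anchoredBox d a)| +
      |jdisc m d P (anchoredBox d a) - jdisc m d P (anchoredBox d b)| + (m : ℝ) ^ d * η := by
  have hy : 0 ≤ y := ha.trans hay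
  have hprod : ∏ i, a i ≤ ∏ i, y i := Finset.prod_le_prod (fun i _ ↦ ha i) fun i _ ↦ hay i
  have hprod' : ∏ i, y i ≤ ∏ i, b i := Finset.prod_le_prod (fun i _ ↦ hy i) fun i _ ↦ hyb i
  have hlower : (m : ℝ) ^ d * (∏ i, y i - ∏ i, a i) ≤ (m : ℝ) ^ d * η := by gcongr; linarith
  have hupper : (m : ℝ) ^ d * (∏ i, b i - ∏ i, y i) ≤ (m : ℝ) ^ d * η := by gcongr; linarith
  have hDa := jdisc_anchoredBox_le_add P ha hay
  have hDb := jdisc_anchoredBox_le_add P hy hyb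
  rw [abs_le]
  constructor
  · linarith [neg_abs_le (jdisc m d P (anchoredBox d a)),
      abs_nonneg (jdisc m d P (anchoredBox d a) - jdisc m d P (anchoredBox d b))]
  · linarith [le_abs_self (jdisc m d P (anchoredBox d a)),
      neg_abs_le (jdisc m d P (anchoredBox d a) - jdisc m d P (anchoredBox d b))]

section Links

variable [NeZero m]

lemma gridFloor_le {z : Fin d → ℝ} (hz : 0 ≤ z) : gridFloor m z ≤ z := by
  have hm : (0 : ℝ) < m := by exact_mod_cast NeZero.pos m
  exact fun i ↦ (div_le_iff₀' hm).2 (Nat.floor_le (mul_nonneg hm.le (hz i)))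

lemma jdisc_anchoredBox_gridFloor_eq_zero {P : JitterConfig m d}
    (hP : ∀ x, P x ∈ jitterCube m d x) {z : Fin d → ℝ} (hz : z ≤ 1) :
    jdisc m d P (anchoredBox d (gridFloor m z)) = 0 :=
  jdisc_anchoredBox_grid_eq_zero hP fun i ↦
    Nat.floor_le_of_le (mul_le_of_le_one_right m.cast_nonneg (hz i))

lemma volume_real_symmDiff_gridFloor_le {z : Fin d → ℝ} (hz : z ∈ Set.Icc 0 1) :
    volume.real (symmDiff (anchoredBox d z) (anchoredBox d (gridFloor m z))) ≤ d / m := by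
  have hm : (0 : ℝ) < m := by exact_mod_cast NeZero.pos m
  have hgap (i : Fin d) : z i - gridFloor m z i ≤ 1 / m := by
    rw [gridFloor, sub_le_iff_le_add, ← add_div, le_div_iff₀' hm, add_comm]
    exact (Nat.lt_floor_add_one _).le
  rw [symmDiff_comm,
    volume_real_symmDiff_anchoredBox (gridFloor_nonneg m z) (gridFloor_le hz.1)]
  calc ∏ i, z i - ∏ i, gridFloor m z i ≤ ∑ i, (z i - gridFloor m z i) :=
        prod_sub_prod_le_sum_sub _ (gridFloor_nonneg m z) (gridFloor_le hz.1) hz.2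
    _ ≤ ∑ _i : Fin d, (1 / m : ℝ) := Finset.sum_le_sum fun i _ ↦ hgap i
    _ = d / m := by simp [div_eq_mul_inv]

variable {F : ℕ → Finset (Fin d → ℝ)} {δ : ℕ → ℝ}

lemma abs_jdisc_le_sum_boxOscillation {P : JitterConfig m d} (hP : ∀ x, P x ∈ jitterCube m d x)
    (hδ : Antitone δ) (hδ0 : (d : ℝ) / m ≤ 2 * δ 0) {a : ℕ → Fin d → ℝ} (ha : ∀ j, a j ∈ F j)
    (ha1 : ∀ j, a j ∈ Set.Icc 0 1)
    (hay : ∀ j, volume.real (symmDiff (anchoredBox d (a j)) (anchoredBox d y)) ≤ δ j) (k : ℕ) :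
    |jdisc m d P (anchoredBox d (a k))| ≤
      boxOscillation m (F 0) ((F 0).image (gridFloor m)) (2 * δ 0) P +
        ∑ j ∈ Finset.range k, boxOscillation m (F j) (F (j + 1)) (2 * δ j) P := by
  induction k with
  | zero =>
    have h := abs_jdisc_sub_le_boxOscillation P (ha 0)
      (Finset.mem_image_of_mem (gridFloor m) (ha 0))
      ((volume_real_symmDiff_gridFloor_le (ha1 0)).trans hδ0)
    rw [jdisc_anchoredBox_gridFloor_eq_zero hP (ha1 0).2, sub_zero] at h
    simpa using h
  | succ k ih =>
    have hvol : volume.real (symmDiff (anchoredBox d (a k)) (anchoredBox d (a (k + 1)))) ≤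
        2 * δ k := by
      have htri := volume_real_symmDiff_anchoredBox_triangle (a := a k) (b := y) (c := a (k + 1))
      have hnext := hay (k + 1)
      rw [symmDiff_comm] at hnext
      linarith [hay k, hδ k.le_succ]
    have hlink := abs_jdisc_sub_le_boxOscillation P (ha k) (ha (k + 1)) hvol
    rw [abs_sub_comm] at hlink
    rw [Finset.sum_range_succ]
    linarith [abs_sub_abs_le_abs_sub (jdisc m d P (anchoredBox d (a (k + 1))))
      (jdisc m d P (anchoredBox d (a k)))]

-- The corner of the box is approximated from below along the covers; consecutive approximations
-- bound boxes of nearly the same volume, and the coarsest one is compared with a grid box.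
lemma starDisc_le_sum_boxOscillation {P : JitterConfig m d} (hP : ∀ x, P x ∈ jitterCube m d x)
    (hF : ∀ j, IsBracketingCover (F j) (δ j)) (hδ : Antitone δ) (hδ0 : (d : ℝ) / m ≤ 2 * δ 0)
    {J : ℕ} (hδJ : 0 ≤ δ J) :
    starDisc m d P ≤ boxOscillation m (F 0) ((F 0).image (gridFloor m)) (2 * δ 0) P +
      ∑ j ∈ Finset.range J, boxOscillation m (F j) (F (j + 1)) (2 * δ j) P +
      boxOscillation m (F J) (F J) (2 * δ J) P + (m : ℝ) ^ d * δ J := by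
  have : Nonempty {y : Fin d → ℝ // ∀ i, y i ∈ Set.Ico (0 : ℝ) 1} := ⟨⟨0, by simp⟩⟩
  refine ciSup_le fun ⟨y, hy⟩ ↦ ?_
  have hy0 : 0 ≤ y := fun i ↦ (hy i).1
  have hy1 : y ≤ 1 := fun i ↦ (hy i).2.le
  choose a ha b hb hay hyb hab using fun j ↦ (hF j).exists_bracket y ⟨hy0, hy1⟩
  have ha1 (j : ℕ) : a j ∈ Set.Icc 0 1 := (hF j).mem_Icc _ (ha j)
  have hvol (j : ℕ) : volume.real (symmDiff (anchoredBox d (a j)) (anchoredBox d y)) ≤ δ j := by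
    rw [volume_real_symmDiff_anchoredBox (ha1 j).1 (hay j)]
    linarith [hab j, Finset.prod_le_prod (fun i (_ : i ∈ Finset.univ) ↦ hy0 i) fun i _ ↦ hyb j i]
  have hlast : |jdisc m d P (anchoredBox d (a J)) - jdisc m d P (anchoredBox d (b J))| ≤
      boxOscillation m (F J) (F J) (2 * δ J) P := by
    refine abs_jdisc_sub_le_boxOscillation P (ha J) (hb J) ?_
    rw [volume_real_symmDiff_anchoredBox (ha1 J).1 ((hay J).trans (hyb J))]
    linarith [hab J]
  have hchain := abs_jdisc_le_sum_boxOscillation hP hδ hδ0 ha ha1 hvol J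
  have hbracket := abs_jdisc_anchoredBox_le_of_bracket P (ha1 J).1 (hay J) (hyb J) (hab J)
  linarith

lemma expStarDisc_le_sum (hF : ∀ j, IsBracketingCover (F j) (δ j)) (hδ : Antitone δ)
    (hδ0 : (d : ℝ) / m ≤ 2 * δ 0) {J : ℕ} (hδJ : 0 ≤ δ J) {ℓ : ℕ → ℝ} (hℓ0 : ∀ j, 0 ≤ ℓ j)
    (hℓ : ∀ i j, i ≤ j + 1 → 2 * (((F j).card : ℝ) * (F i).card) ≤ exp (ℓ j)) :
    expStarDisc m d ≤ (2 * √((m : ℝ) ^ d * (2 * δ 0) * ℓ 0) + 2 * ℓ 0) +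
      ∑ j ∈ Finset.range (J + 1), (2 * √((m : ℝ) ^ d * (2 * δ j) * ℓ j) + 2 * ℓ j) +
      (m : ℝ) ^ d * δ J := by
  have hF1 (j : ℕ) : ∀ z ∈ F j, z ≤ 1 := fun z hz ↦ ((hF j).mem_Icc z hz).2
  have hG1 : ∀ z ∈ (F 0).image (gridFloor m), z ≤ 1 := by
    refine Finset.forall_mem_image.2 fun z hz ↦ ?_
    exact (gridFloor_le ((hF 0).mem_Icc z hz).1).trans (hF1 0 z hz)
  have hGcard : 2 * (((F 0).card : ℝ) * ((F 0).image (gridFloor m)).card) ≤ exp (ℓ 0) := by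
    refine le_trans ?_ (hℓ 0 0 zero_le_one)
    gcongr 2 * (_ * ?_)
    exact_mod_cast Finset.card_image_le
  have hbase := integrable_boxOscillation (m := m) (η := 2 * δ 0) (hF1 0) hG1
  have hlink (j : ℕ) :=
    integrable_boxOscillation (m := m) (η := 2 * δ j) (hF1 j) (hF1 (j + 1))
  have hlast := integrable_boxOscillation (m := m) (η := 2 * δ J) (hF1 J) (hF1 J)
  have hsum : ∑ j ∈ Finset.range J,
      ∫ P, boxOscillation m (F j) (F (j + 1)) (2 * δ j) P ∂jitterMeasure m d ≤
      ∑ j ∈ Finset.range J, (2 * √((m : ℝ) ^ d * (2 * δ j) * ℓ j) + 2 * ℓ j) :=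
    Finset.sum_le_sum fun j _ ↦
      integral_boxOscillation_le (hF1 j) (hF1 (j + 1)) (hℓ0 j) (hℓ (j + 1) j le_rfl)
  have hexp : expStarDisc m d ≤
      ∫ P, (boxOscillation m (F 0) ((F 0).image (gridFloor m)) (2 * δ 0) P +
        ∑ j ∈ Finset.range J, boxOscillation m (F j) (F (j + 1)) (2 * δ j) P +
        boxOscillation m (F J) (F J) (2 * δ J) P + (m : ℝ) ^ d * δ J) ∂jitterMeasure m d := by
    refine integral_mono_of_nonneg (.of_forall fun P ↦ Real.iSup_nonneg fun y ↦ abs_nonneg _)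
      (by fun_prop) ?_
    filter_upwards [ae_forall_mem_jitterCube] with P hP
    exact starDisc_le_sum_boxOscillation hP hF hδ hδ0 hδJ
  rw [integral_add (by fun_prop) (by fun_prop), integral_add (by fun_prop) hlast,
    integral_add hbase (by fun_prop), integral_finsetSum _ fun j _ ↦ hlink j] at hexp
  simp only [integral_const, probReal_univ, one_smul] at hexp
  rw [Finset.sum_range_succ]
  linarith [integral_boxOscillation_le (m := m) (η := 2 * δ 0) (hF1 0) hG1 (hℓ0 0) hGcard,
    integral_boxOscillation_le (m := m) (η := 2 * δ J) (hF1 J) (hF1 J) (hℓ0 J)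
      (hℓ J J J.le_succ)]

end Links

end Chaining

section ChainingNumerics

lemma one_add_natCast_le_mul_pow (j : ℕ) : (1 : ℝ) + j ≤ 8 * (9 / 8) ^ j := by
  have h := one_add_mul_le_pow (show (-2 : ℝ) ≤ 1 / 8 by norm_num) j
  rw [show (1 : ℝ) + 1 / 8 = 9 / 8 by norm_num] at h
  linarith

variable {d Q R : ℝ}

lemma sqrt_scale_le (hd : 0 ≤ d) (hQ : 0 ≤ Q) (hR : 0 ≤ R) (j : ℕ) :
    √(2 * d * Q ^ 2 / 2 ^ j * (11 * d * R ^ 2 * (1 + j))) ≤ 15 * (d * Q * R) * (3 / 4) ^ j := by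
  refine sqrt_le_iff.2 ⟨by positivity, ?_⟩
  have hpow : ((3 / 4 : ℝ) ^ j) ^ 2 = (9 / 8) ^ j / 2 ^ j := by
    rw [← div_pow, ← pow_mul, mul_comm j 2, pow_mul]
    norm_num
  calc 2 * d * Q ^ 2 / 2 ^ j * (11 * d * R ^ 2 * (1 + j))
      ≤ 2 * d * Q ^ 2 / 2 ^ j * (11 * d * R ^ 2 * (8 * (9 / 8) ^ j)) := by
        gcongr
        exact one_add_natCast_le_mul_pow j
    _ = 176 * (d * Q * R) ^ 2 * ((9 / 8) ^ j / 2 ^ j) := by ring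
    _ ≤ 225 * (d * Q * R) ^ 2 * ((9 / 8) ^ j / 2 ^ j) := by gcongr; norm_num
    _ = (15 * (d * Q * R) * (3 / 4) ^ j) ^ 2 := by rw [← hpow]; ring

lemma sum_sqrt_scale_le (hd : 0 ≤ d) (hQ : 0 ≤ Q) (hR : 0 ≤ R) (J : ℕ) :
    ∑ j ∈ Finset.range J, √(2 * d * Q ^ 2 / 2 ^ j * (11 * d * R ^ 2 * (1 + j))) ≤
      60 * (d * Q * R) := by
  have hgeom : ∑ j ∈ Finset.range J, (3 / 4 : ℝ) ^ j ≤ 4 := by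
    have hpow : (0 : ℝ) ≤ (3 / 4) ^ J := by positivity
    linarith [mul_neg_geom_sum (3 / 4 : ℝ) J]
  calc ∑ j ∈ Finset.range J, √(2 * d * Q ^ 2 / 2 ^ j * (11 * d * R ^ 2 * (1 + j)))
      ≤ ∑ j ∈ Finset.range J, 15 * (d * Q * R) * (3 / 4) ^ j :=
        Finset.sum_le_sum fun j _ ↦ sqrt_scale_le hd hQ hR j
    _ = 15 * (d * Q * R) * ∑ j ∈ Finset.range J, (3 / 4 : ℝ) ^ j := by rw [Finset.mul_sum]
    _ ≤ 15 * (d * Q * R) * 4 := by gcongr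
    _ = 60 * (d * Q * R) := by ring

lemma mul_succ_sq_le (hQ : 0 ≤ Q) (hRQ : R ^ 2 ≤ 2 * Q) {J : ℕ} (hJ : (2 : ℝ) ^ J ≤ 2 * Q) :
    R * ((J : ℝ) + 1) ^ 2 ≤ 128 * Q := by
  refine le_of_sq_le_sq ?_ (by positivity)
  have hpow : ((J : ℝ) + 1) ^ 4 ≤ 4096 * 2 ^ J := by
    calc ((J : ℝ) + 1) ^ 4 ≤ (8 * (9 / 8) ^ J) ^ 4 := by
          gcongr
          rw [add_comm]
          exact one_add_natCast_le_mul_pow J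
      _ = 4096 * ((9 / 8) ^ 4) ^ J := by rw [mul_pow, ← pow_mul, ← pow_mul, mul_comm J]; norm_num
      _ ≤ 4096 * 2 ^ J := by gcongr; norm_num
  calc (R * ((J : ℝ) + 1) ^ 2) ^ 2 = R ^ 2 * ((J : ℝ) + 1) ^ 4 := by ring
    _ ≤ 2 * Q * (4096 * (2 * Q)) := by gcongr; exact hpow.trans (by gcongr)
    _ = (128 * Q) ^ 2 := by ring

lemma sum_linear_le (hd : 0 ≤ d) (hQ : 0 ≤ Q) (hR : 0 ≤ R) (hRQ : R ^ 2 ≤ 2 * Q) {J : ℕ}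
    (hJ : (2 : ℝ) ^ J ≤ 2 * Q) :
    ∑ j ∈ Finset.range (J + 1), 11 * d * R ^ 2 * (1 + (j : ℝ)) ≤ 1408 * (d * Q * R) := by
  calc ∑ j ∈ Finset.range (J + 1), 11 * d * R ^ 2 * (1 + (j : ℝ))
      ≤ ∑ j ∈ Finset.range (J + 1), 11 * d * R ^ 2 * ((J : ℝ) + 1) := by
        refine Finset.sum_le_sum fun j hj ↦ ?_
        have hjJ : (j : ℝ) ≤ J := by exact_mod_cast Nat.lt_succ_iff.1 (Finset.mem_range.1 hj)
        gcongr 11 * d * R ^ 2 * ?_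
        linarith
    _ = 11 * d * R * (R * ((J : ℝ) + 1) ^ 2) := by simp; ring
    _ ≤ 11 * d * R * (128 * Q) := by
        gcongr 11 * d * R * ?_
        exact mul_succ_sq_le hQ hRQ hJ
    _ = 1408 * (d * Q * R) := by ring

lemma chaining_sum_le (hd : 0 ≤ d) (hQ : 0 ≤ Q) (hR : 1 ≤ R) (hRQ : R ^ 2 ≤ 2 * Q) {J : ℕ}
    (hQJ : Q ≤ 2 ^ J) (hJQ : (2 : ℝ) ^ J ≤ 2 * Q) :
    (2 * √(2 * d * Q ^ 2 / 2 ^ 0 * (11 * d * R ^ 2 * (1 + (0 : ℕ)))) +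
        2 * (11 * d * R ^ 2 * (1 + (0 : ℕ)))) +
      ∑ j ∈ Finset.range (J + 1), (2 * √(2 * d * Q ^ 2 / 2 ^ j * (11 * d * R ^ 2 * (1 + j))) +
        2 * (11 * d * R ^ 2 * (1 + j))) + d * Q ^ 2 / 2 ^ J ≤ 6000 * (d * Q * R) := by
  have hR0 : 0 ≤ R := zero_le_one.trans hR
  have hnonneg : 0 ≤ d * Q * R := by positivity
  set s : ℕ → ℝ := fun j ↦ 2 * √(2 * d * Q ^ 2 / 2 ^ j * (11 * d * R ^ 2 * (1 + j))) +
    2 * (11 * d * R ^ 2 * (1 + j)) with hs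
  have hsum : ∑ j ∈ Finset.range (J + 1), s j ≤ 2936 * (d * Q * R) := by
    rw [hs, Finset.sum_add_distrib, ← Finset.mul_sum, ← Finset.mul_sum]
    linarith [sum_sqrt_scale_le hd hQ hR0 (J + 1), sum_linear_le hd hQ hR0 hRQ hJQ]
  have hbase : s 0 ≤ ∑ j ∈ Finset.range (J + 1), s j :=
    Finset.single_le_sum (fun j _ ↦ by positivity) (Finset.mem_range.2 J.succ_pos)
  have hlast : d * Q ^ 2 / 2 ^ J ≤ d * Q * R := by
    rw [div_le_iff₀ (by positivity)]
    calc d * Q ^ 2 = d * Q * 1 * Q := by ring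
      _ ≤ d * Q * R * 2 ^ J := by gcongr
  change s 0 + ∑ j ∈ Finset.range (J + 1), s j + d * Q ^ 2 / 2 ^ J ≤ _
  linarith

lemma bracketing_exponent_le {L : ℝ} (hd : 2 ≤ d) (hL : 0 ≤ L) {i j : ℕ} (hij : i ≤ j + 1) :
    1 + (d * (4 + 2 * (L + j * log 2)) + d * (4 + 2 * (L + i * log 2))) ≤
      11 * d * (1 + L) * (1 + j) := by
  have hlog : log 2 ≤ 1 := by linarith [log_two_lt_d9]
  have hij' : (i : ℝ) ≤ j + 1 := by exact_mod_cast hij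
  have hj : (j : ℝ) * log 2 ≤ j := mul_le_of_le_one_right j.cast_nonneg hlog
  have hi : (i : ℝ) * log 2 ≤ j + 1 := (mul_le_of_le_one_right i.cast_nonneg hlog).trans hij'
  have hLj : 0 ≤ L * j := by positivity
  calc 1 + (d * (4 + 2 * (L + j * log 2)) + d * (4 + 2 * (L + i * log 2)))
      ≤ d * (1 / 2) + (d * (4 + 2 * (L + j)) + d * (4 + 2 * (L + (j + 1)))) := by
        gcongr
        linarith
    _ = d * (1 / 2 + (4 + 2 * (L + j)) + (4 + 2 * (L + (j + 1)))) := by ring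
    _ ≤ d * (11 * (1 + L) * (1 + j)) := by
        gcongr
        linarith
    _ = 11 * d * (1 + L) * (1 + j) := by ring

lemma sq_rpow_half_mul_self {m : ℝ} (hm : 0 < m) (d : ℕ) :
    (m ^ (((d : ℝ) - 1) / 2)) ^ 2 * m = m ^ d := by
  rw [← rpow_natCast, ← rpow_mul hm.le, ← rpow_add_one hm.ne', ← rpow_natCast]
  congr 1
  push_cast
  ring

lemma one_add_log_div_le {m : ℝ} (hd : 1 ≤ d) (hm : 0 < m) : 1 + log (m / d) ≤ 2 * √m := by
  have hlog : log (m / d) ≤ log m := log_le_log (by positivity) (div_le_self hm.le hd)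
  have hsqrt : log m = 2 * log (√m) := by rw [log_sqrt hm.le]; ring
  linarith [log_le_sub_one_of_pos (sqrt_pos.2 hm)]

end ChainingNumerics

lemma exists_bracketingCovers {d m : ℕ} (hd : 2 ≤ d) (hdm : d ≤ m) :
    ∃ F : ℕ → Finset (Fin d → ℝ), (∀ j, IsBracketingCover (F j) ((d : ℝ) / m / 2 ^ j)) ∧
      ∀ i j, i ≤ j + 1 → 2 * (((F j).card : ℝ) * (F i).card) ≤
        exp (11 * d * (1 + log (m / d)) * (1 + j)) := by
  have hd2 : (2 : ℝ) ≤ d := by exact_mod_cast hd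
  have hdm' : (d : ℝ) ≤ m := by exact_mod_cast hdm
  have hm : (0 : ℝ) < m := by linarith
  have : Nonempty (Fin d) := ⟨⟨0, by omega⟩⟩
  have hδ1 (j : ℕ) : (d : ℝ) / m / 2 ^ j ≤ 1 :=
    div_le_one_of_le₀ ((div_le_one_of_le₀ hdm' hm.le).trans (one_le_pow₀ one_le_two))
      (by positivity)
  have hlog (j : ℕ) : log (1 / ((d : ℝ) / m / 2 ^ j)) = log (m / d) + j * log 2 := by
    rw [← log_pow, ← log_mul (by positivity) (by positivity)]
    congr 1
    field_simp
  choose F hF hcard using fun j ↦ exists_isBracketingCover (ι := Fin d)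
    (show 0 < (d : ℝ) / m / 2 ^ j by positivity) (hδ1 j)
  simp only [hlog, Fintype.card_fin] at hcard
  refine ⟨F, hF, fun i j hij ↦ ?_⟩
  calc 2 * (((F j).card : ℝ) * (F i).card)
      ≤ exp 1 * (exp (d * (4 + 2 * (log (m / d) + j * log 2))) *
          exp (d * (4 + 2 * (log (m / d) + i * log 2)))) := by
        gcongr
        · linarith [add_one_le_exp (1 : ℝ)]
        · exact hcard j
        · exact hcard i
    _ = exp (1 + (d * (4 + 2 * (log (m / d) + j * log 2)) +
          d * (4 + 2 * (log (m / d) + i * log 2)))) := by rw [← exp_add, ← exp_add]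
    _ ≤ exp (11 * d * (1 + log (m / d)) * (1 + j)) :=
        exp_le_exp.2 (bracketing_exponent_le hd2
          (log_nonneg ((one_le_div₀ (by positivity)).2 hdm')) hij)

-- With the volume scales `d / m / 2 ^ j`, the variance parameters decay geometrically while the
-- logarithms of the cardinalities grow linearly; the chain stops once `2 ^ J` exceeds
-- `m ^ ((d - 1) / 2)`.
theorem expStarDisc_le {d m : ℕ} (hd : 2 ≤ d) (hdm : d ≤ m) :
    expStarDisc m d ≤
      6000 * d * (m : ℝ) ^ (((d : ℝ) - 1) / 2) * √(1 + log ((m : ℝ) / d)) := by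
  have : NeZero m := ⟨by omega⟩
  have hd2 : (2 : ℝ) ≤ d := by exact_mod_cast hd
  have hdm' : (d : ℝ) ≤ m := by exact_mod_cast hdm
  have hm : (0 : ℝ) < m := by linarith
  set Q : ℝ := (m : ℝ) ^ (((d : ℝ) - 1) / 2)
  set R : ℝ := √(1 + log ((m : ℝ) / d))
  have hlog : 0 ≤ log ((m : ℝ) / d) := log_nonneg ((one_le_div₀ (by positivity)).2 hdm')
  have hR : R ^ 2 = 1 + log ((m : ℝ) / d) := sq_sqrt (by linarith)
  have hR1 : 1 ≤ R := one_le_sqrt.2 (by linarith)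
  have hQ : Q ^ 2 * m = (m : ℝ) ^ d := sq_rpow_half_mul_self hm d
  have hmQ : √m ≤ Q := by
    rw [sqrt_eq_rpow]
    exact rpow_le_rpow_of_exponent_le (by linarith) (by linarith)
  have hQ1 : 1 ≤ Q := (one_le_sqrt.2 (by linarith)).trans hmQ
  have hRQ : R ^ 2 ≤ 2 * Q := by
    linarith [one_add_log_div_le (show (1 : ℝ) ≤ d by linarith) hm]
  obtain ⟨n, hnQ, hQn⟩ := exists_nat_pow_near hQ1 one_lt_two
  obtain ⟨F, hF, hcard⟩ := exists_bracketingCovers hd hdm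
  have hδ : Antitone fun j : ℕ ↦ (d : ℝ) / m / 2 ^ j := fun i j hij ↦
    div_le_div_of_nonneg_left (by positivity) (by positivity) (pow_le_pow_right₀ one_le_two hij)
  have hsum := expStarDisc_le_sum (J := n + 1) hF hδ
    (by simpa using le_mul_of_one_le_left (by positivity) one_le_two) (by positivity)
    (fun j ↦ by positivity) hcard
  have hscale (j : ℕ) : (m : ℝ) ^ d * (2 * ((d : ℝ) / m / 2 ^ j)) = 2 * d * Q ^ 2 / 2 ^ j := by
    rw [← hQ]
    field_simp
  have hscale' (j : ℕ) : (m : ℝ) ^ d * ((d : ℝ) / m / 2 ^ j) = d * Q ^ 2 / 2 ^ j := by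
    rw [← hQ]
    field_simp
  simp only [hscale, hscale', ← hR] at hsum
  linarith [chaining_sum_le (by positivity) (by positivity) hR1 hRQ hQn.le
    (show (2 : ℝ) ^ (n + 1) ≤ 2 * Q by rw [pow_succ]; linarith)]

section StarDiscrepancy

open Filter Topology

variable {m d : ℕ} {P : JitterConfig m d} {y : Fin d → ℝ}

lemma abs_jdisc_le_starDisc (hy : ∀ i, y i ∈ Set.Ico (0 : ℝ) 1) :
    |jdisc m d P (anchoredBox d y)| ≤ starDisc m d P := by
  refine le_ciSup (f := fun y : {y : Fin d → ℝ // ∀ i, y i ∈ Set.Ico (0 : ℝ) 1} ↦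
    |jdisc m d P (anchoredBox d y.1)|) ⟨(m : ℝ) ^ d, ?_⟩ ⟨y, hy⟩
  rintro _ ⟨z, rfl⟩
  exact abs_jdisc_anchoredBox_le P ⟨fun i ↦ (z.2 i).1, fun i ↦ (z.2 i).2.le⟩

lemma starDisc_nonneg : 0 ≤ starDisc m d P := Real.iSup_nonneg fun _ ↦ abs_nonneg _

lemma starDisc_le : starDisc m d P ≤ (m : ℝ) ^ d :=
  Real.iSup_le (fun y ↦ abs_jdisc_anchoredBox_le P ⟨fun i ↦ (y.2 i).1, fun i ↦ (y.2 i).2.le⟩)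
    (by positivity)

lemma eventually_mem_anchoredBox_iff (p y : Fin d → ℝ) :
    ∀ᶠ z in 𝓝[≤] y, p ∈ anchoredBox d z ↔ p ∈ anchoredBox d y := by
  have hlt (i : Fin d) (hi : p i < y i) : ∀ᶠ z in 𝓝[≤] y, p i < z i :=
    nhdsWithin_le_nhds ((continuous_apply i).tendsto y |>.eventually_const_lt hi)
  have hall : ∀ᶠ z in 𝓝[≤] y, ∀ i, p i < y i → p i < z i :=
    eventually_all.2 fun i ↦ eventually_imp_distrib_left.2 (hlt i)
  filter_upwards [hall, self_mem_nhdsWithin] with z hz hzy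
  exact ⟨fun hp ↦ anchoredBox_mono hzy hp, fun hp i _ ↦ ⟨(hp i trivial).1, hz i (hp i trivial).2⟩⟩

lemma tendsto_jdisc_anchoredBox (P : JitterConfig m d) (hy : 0 ≤ y) :
    Tendsto (fun z ↦ jdisc m d P (anchoredBox d z)) (𝓝[Set.Icc 0 y] y)
      (𝓝 (jdisc m d P (anchoredBox d y))) := by
  have hvol : Tendsto (fun z ↦ volume.real (anchoredBox d z)) (𝓝[Set.Icc 0 y] y)
      (𝓝 (volume.real (anchoredBox d y))) := by
    rw [volume_real_anchoredBox hy]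
    have hprod : Continuous fun z : Fin d → ℝ ↦ ∏ i, z i := by fun_prop
    refine (hprod.tendsto y |>.mono_left nhdsWithin_le_nhds).congr' ?_
    filter_upwards [self_mem_nhdsWithin] with z hz using (volume_real_anchoredBox hz.1).symm
  have hind (x : Fin d → Fin m) :
      Tendsto (fun z ↦ (anchoredBox d z).indicator (1 : (Fin d → ℝ) → ℝ) (P x))
        (𝓝[Set.Icc 0 y] y) (𝓝 ((anchoredBox d y).indicator 1 (P x))) := by
    classical
    refine tendsto_const_nhds.congr' ?_
    filter_upwards [nhdsWithin_mono y Set.Icc_subset_Iic_self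
      (eventually_mem_anchoredBox_iff (P x) y)] with z hz
    simp only [Set.indicator_apply, hz]
  simp only [jdisc_eq_sum_indicator_sub]
  exact (tendsto_finsetSum _ fun x _ ↦ hind x).sub (hvol.const_mul _)

lemma mem_closure_Icc_inter_range_ratCast {t : ℝ} (ht : 0 ≤ t) :
    t ∈ closure (Set.Icc 0 t ∩ Set.range ((↑) : ℚ → ℝ)) := by
  obtain rfl | ht0 := ht.eq_or_lt
  · exact subset_closure ⟨Set.left_mem_Icc.2 le_rfl, 0, Rat.cast_zero⟩
  refine mem_closure_iff_nhds.2 fun U hU ↦ ?_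
  obtain ⟨l, hl, hlU⟩ := exists_Ioc_subset_of_mem_nhds hU ⟨0, ht0⟩
  obtain ⟨q, hq, hqt⟩ := exists_rat_btwn (max_lt hl ht0)
  exact ⟨q, hlU ⟨(le_max_left _ _).trans_lt hq, hqt.le⟩,
    ⟨(le_max_right _ _).trans hq.le, hqt.le⟩, q, rfl⟩

lemma starDisc_eq_iSup_rat (P : JitterConfig m d) :
    starDisc m d P = ⨆ q : {q : Fin d → ℚ // ∀ i, (q i : ℝ) ∈ Set.Ico (0 : ℝ) 1},
      |jdisc m d P (anchoredBox d fun i ↦ q.1 i)| := by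
  have hbdd : BddAbove (Set.range fun q : {q : Fin d → ℚ // ∀ i, (q i : ℝ) ∈ Set.Ico (0 : ℝ) 1} ↦
      |jdisc m d P (anchoredBox d fun i ↦ q.1 i)|) :=
    ⟨starDisc m d P, by rintro _ ⟨q, rfl⟩; exact abs_jdisc_le_starDisc q.2⟩
  refine le_antisymm (Real.iSup_le (fun ⟨y, hy⟩ ↦ ?_) (Real.iSup_nonneg fun _ ↦ abs_nonneg _))
    (Real.iSup_le (fun q ↦ abs_jdisc_le_starDisc q.2) starDisc_nonneg)
  have hy0 : 0 ≤ y := fun i ↦ (hy i).1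
  set S : Set (Fin d → ℝ) := Set.univ.pi fun i ↦ Set.Icc 0 (y i) ∩ Set.range ((↑) : ℚ → ℝ) with hS
  have hyS : y ∈ closure S := by
    rw [hS, closure_pi_set]
    exact fun i _ ↦ mem_closure_Icc_inter_range_ratCast (hy0 i)
  have hSy : S ⊆ Set.Icc 0 y := fun z hz ↦
    ⟨fun i ↦ (hz i trivial).1.1, fun i ↦ (hz i trivial).1.2⟩
  have : (𝓝[S] y).NeBot := mem_closure_iff_nhdsWithin_neBot.1 hyS
  refine le_of_tendsto ((tendsto_jdisc_anchoredBox P hy0).mono_left (nhdsWithin_mono y hSy)).abs ?_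
  filter_upwards [self_mem_nhdsWithin] with z hz
  choose q hq using fun i ↦ (hz i trivial).2
  obtain rfl : (fun i ↦ (q i : ℝ)) = z := funext hq
  exact le_ciSup hbdd ⟨q, fun i ↦ ⟨(hSy hz).1 i, ((hSy hz).2 i).trans_lt (hy i).2⟩⟩

variable [NeZero m]

lemma measurable_starDisc : Measurable (starDisc m d) := by
  simp only [funext starDisc_eq_iSup_rat]
  exact .iSup fun q ↦ (measurable_jdisc measurableSet_anchoredBox
    (anchoredBox_mono fun i ↦ (q.2 i).2.le)).abs

lemma integrable_starDisc : Integrable (starDisc m d) (jitterMeasure m d) :=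
  .of_bound measurable_starDisc.aestronglyMeasurable ((m : ℝ) ^ d)
    (.of_forall fun _ ↦ by rw [norm_of_nonneg starDisc_nonneg]; exact starDisc_le)

end StarDiscrepancy

section HalfGridBoxes

variable {m d : ℕ} {i : Fin d} {x : Fin d → Fin m} {p : Fin d → ℝ} {k : Fin d → ℕ}

/-- The half-space bisecting the cube with index `x` orthogonally to direction `i`. -/
def lowerHalf (i : Fin d) (x : Fin d → Fin m) : Set (Fin d → ℝ) := {p | m * p i < x i + 1 / 2}

open scoped Classical in
/-- The random sign telling whether a point lies in the lower or in the upper half, in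
direction `i`, of the cube with index `x`. -/
def halfSign (i : Fin d) (x : Fin d → Fin m) (p : Fin d → ℝ) : ℝ :=
  if p ∈ lowerHalf i x then 1 else -1

lemma measurableSet_lowerHalf : MeasurableSet (lowerHalf i x) :=
  measurableSet_lt (by fun_prop) measurable_const

lemma halfSign_eq : halfSign i x p = 2 * (lowerHalf i x).indicator 1 p - 1 := by
  by_cases hp : p ∈ lowerHalf i x <;> norm_num [halfSign, hp]

lemma measurable_halfSign : Measurable (halfSign i x) := by
  simp only [funext fun p ↦ halfSign_eq (i := i) (x := x) (p := p)]
  exact ((measurable_one.indicator measurableSet_lowerHalf).const_mul 2).sub_const 1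

lemma lowerHalf_inter_jitterCube [NeZero m] : lowerHalf i x ∩ jitterCube m d x =
    Set.univ.pi fun j ↦ Set.Ico ((x j : ℝ) / m)
      ((x j : ℝ) / m + Function.update (1 : Fin d → ℝ) i (1 / 2) j / m) := by
  have hm : (0 : ℝ) < m := by exact_mod_cast NeZero.pos m
  ext p
  simp only [Set.mem_inter_iff, mem_jitterCube_iff, lowerHalf, Set.mem_ofPred_eq, Set.mem_pi,
    Set.mem_univ, true_imp_iff, Set.mem_Ico, ← add_div, div_le_iff₀' hm, lt_div_iff₀' hm]
  refine ⟨fun ⟨hi, hp⟩ j ↦ ⟨(hp j).1, ?_⟩,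
    fun hp ↦ ⟨by simpa using (hp i).2, fun j ↦ ⟨(hp j).1, (hp j).2.trans_le ?_⟩⟩⟩
  · obtain rfl | hj := eq_or_ne j i
    · simpa using hi
    · simpa [hj] using (hp j).2
  · obtain rfl | hj := eq_or_ne j i
    · rw [Function.update_self]
      linarith
    · rw [Function.update_of_ne hj, Pi.one_apply]

variable [NeZero m]

lemma cubeMeasure_real_lowerHalf : (cubeMeasure m d x).real (lowerHalf i x) = 1 / 2 := by
  have hm : (0 : ℝ) < m := by exact_mod_cast NeZero.pos m
  have hside (j : Fin d) : 0 ≤ Function.update (1 : Fin d → ℝ) i (1 / 2) j / m := by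
    obtain rfl | hj := eq_or_ne j i
    · rw [Function.update_self]; positivity
    · rw [Function.update_of_ne hj]; exact div_nonneg zero_le_one hm.le
  rw [cubeMeasure, measureReal_ennreal_smul_apply, measureReal_restrict_apply
    measurableSet_lowerHalf, lowerHalf_inter_jitterCube, measureReal_def, Real.volume_pi_Ico,
    ENNReal.toReal_prod]
  simp only [add_sub_cancel_left, ENNReal.toReal_ofReal (hside _), Finset.prod_div_distrib,
    Finset.prod_update_of_mem (Finset.mem_univ i)]
  simp
  field_simp

lemma cubeDisc_lowerHalf : cubeDisc m d (lowerHalf i x) x p = halfSign i x p / 2 := by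
  rw [cubeDisc, cubeMeasure_real_lowerHalf, halfSign_eq]
  ring

lemma isRademacherFamily_halfSign (i : Fin d) :
    IsRademacherFamily (fun x P ↦ halfSign i x (P x)) (jitterMeasure m d) where
  measurable x := measurable_halfSign.comp (measurable_pi_apply x)
  indep := iIndepFun_pi (μ := cubeMeasure m d) fun x ↦ measurable_halfSign.aemeasurable
  eq_one_or_neg_one x P := by
    rw [halfSign]
    split_ifs <;> simp
  integral_eq_zero x := by
    have hsign (p : Fin d → ℝ) : halfSign i x p = 2 * cubeDisc m d (lowerHalf i x) x p := by
      rw [cubeDisc_lowerHalf]; ring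
    rw [jitterMeasure_eq_pi, integral_comp_eval measurable_halfSign.aestronglyMeasurable]
    simp only [hsign, integral_const_mul, integral_cubeDisc measurableSet_lowerHalf, mul_zero]

/-- The anchored box whose corner has coordinates `k i / (2 m)`: in direction `i` it ends at a face
of the grid if `k i` is even, and bisects a layer of cubes if `k i` is odd. -/
def halfGridBox (m d : ℕ) (k : Fin d → ℕ) : Set (Fin d → ℝ) :=
  anchoredBox d fun i ↦ (k i : ℝ) / (2 * m)

lemma mem_halfGridBox_iff (hp : p ∈ jitterCube m d x) :
    p ∈ halfGridBox m d k ↔ ∀ i, 2 * (m * p i) < k i := by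
  have hm : (0 : ℝ) < m := by exact_mod_cast NeZero.pos m
  have hp0 (i : Fin d) : 0 ≤ p i := nonneg_of_mul_nonneg_right
    ((Nat.cast_nonneg _).trans (mem_jitterCube_iff.1 hp i).1) hm
  simp only [halfGridBox, anchoredBox, Set.mem_pi, Set.mem_univ, true_imp_iff, Set.mem_Ico, hp0,
    true_and, lt_div_iff₀' (mul_pos two_pos hm), mul_assoc]

-- In all directions but `i` the box extends beyond the cube, so only coordinate `i` matters.
lemma cubeDisc_halfGridBox (hx : ∀ j ≠ i, 2 * (x j : ℕ) + 2 ≤ k j) (hp : p ∈ jitterCube m d x) :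
    cubeDisc m d (halfGridBox m d k) x p =
      if k i = 2 * (x i : ℕ) + 1 then halfSign i x p / 2 else 0 := by
  have hmem (p : Fin d → ℝ) (hp : p ∈ jitterCube m d x) :
      p ∈ halfGridBox m d k ↔ 2 * (m * p i) < k i := by
    refine (mem_halfGridBox_iff hp).trans ⟨fun h ↦ h i, fun hi j ↦ ?_⟩
    obtain rfl | hj := eq_or_ne j i
    · exact hi
    · have hk : 2 * ((x j : ℕ) : ℝ) + 2 ≤ k j := by exact_mod_cast hx j hj
      linarith [(mem_jitterCube_iff.1 hp j).2]
  split_ifs with hki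
  · rw [← cubeDisc_lowerHalf]
    refine cubeDisc_congr (fun p hp ↦ (hmem p hp).trans ?_) hp
    rw [hki, lowerHalf, Set.mem_ofPred_eq]
    push_cast
    constructor <;> intro h <;> linarith
  · obtain hlt | hgt : k i ≤ 2 * (x i : ℕ) ∨ 2 * (x i : ℕ) + 2 ≤ k i := by omega
    · refine cubeDisc_eq_zero_of_forall_notMem (fun p hp hpk ↦ ?_) hp
      have hk : (k i : ℝ) ≤ 2 * (x i : ℕ) := by exact_mod_cast hlt
      linarith [(mem_jitterCube_iff.1 hp i).1, (hmem p hp).1 hpk]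
    · refine cubeDisc_eq_zero_of_forall_mem (fun p hp ↦ (hmem p hp).2 ?_) hp
      have hk : 2 * ((x i : ℕ) : ℝ) + 2 ≤ k i := by exact_mod_cast hgt
      linarith [(mem_jitterCube_iff.1 hp i).2]

end HalfGridBoxes

section AdaptiveBoxes

variable {m d a : ℕ} {t : ℝ} {i : Fin d} {κ : Fin m} {x : Fin d → Fin m} {k : Fin d → ℕ}
  {P : JitterConfig m d}

/-- The cubes with `i`-th index `κ` which are below `a` in all other directions. -/
def layer (a : ℕ) (i : Fin d) (κ : Fin m) : Finset (Fin d → Fin m) :=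
  Finset.univ.filter fun x ↦ x i = κ ∧ ∀ j ≠ i, (x j : ℕ) < a

/-- The sum of the signs in direction `i` over the layer of height `κ`; it is twice the
contribution of this layer to the discrepancy of a box whose upper face bisects it. -/
def layerSum (a : ℕ) (i : Fin d) (κ : Fin m) (P : JitterConfig m d) : ℝ :=
  ∑ x ∈ layer a i κ, halfSign i x (P x)

/-- The cubes with at most one index `≥ a`: the cube `[0, a/m)^d` and the layers around it. -/
def layeredCubes (m d a : ℕ) : Finset (Fin d → Fin m) :=
  Finset.univ.filter fun x ↦ ∃ i, ∀ j ≠ i, (x j : ℕ) < a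

open scoped Classical in
/-- The corner, on the scale of `halfGridBox`, of a box adapted to the point configuration: in
direction `i` it bisects some layer of height at least `a` whose sum is at least `t`, or stops at
the face `a / m` if there is no such layer. -/
def selectedCorner (a : ℕ) (t : ℝ) (P : JitterConfig m d) (i : Fin d) : ℕ :=
  if h : ∃ κ : Fin m, a ≤ (κ : ℕ) ∧ t ≤ layerSum a i κ P then 2 * (h.choose : ℕ) + 1 else 2 * a

lemma layer_eq_piFinset : layer a i κ = Fintype.piFinset
    (Function.update (fun _ ↦ Finset.univ.filter fun u : Fin m ↦ (u : ℕ) < a) i {κ}) := by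
  ext x
  simp only [layer, Finset.mem_filter, Finset.mem_univ, true_and, Fintype.mem_piFinset]
  rw [Function.forall_update_iff _ fun j s ↦ x j ∈ s]
  simp

lemma card_layer (ha : a ≤ m) : (layer a i κ).card = a ^ (d - 1) := by
  have hlow : (Finset.univ.filter fun u : Fin m ↦ (u : ℕ) < a).card = a := by
    rw [Fin.card_filter_val_lt, min_eq_right ha]
  simp only [layer_eq_piFinset, Fintype.card_piFinset, Function.apply_update fun _ ↦ Finset.card,
    hlow, Finset.prod_update_of_mem (Finset.mem_univ i)]
  simp [← Finset.compl_eq_univ_sdiff, Finset.card_compl]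

lemma pairwise_disjoint_layer (a : ℕ) (i : Fin d) :
    Pairwise (Function.onFun Disjoint (layer (m := m) a i)) := fun _ _ hκ ↦
  Finset.disjoint_left.2 fun _ hx hx' ↦
    hκ ((Finset.mem_filter.1 hx).2.1.symm.trans (Finset.mem_filter.1 hx').2.1)

lemma card_filter_le_val (ha : a ≤ m) :
    (Finset.univ.filter fun κ : Fin m ↦ a ≤ (κ : ℕ)).card = m - a := by
  have h := Finset.card_filter_add_card_filter_not (s := (Finset.univ : Finset (Fin m)))
    (fun κ : Fin m ↦ (κ : ℕ) < a)
  rw [Fin.card_filter_val_lt, min_eq_right ha, Finset.card_univ, Fintype.card_fin] at h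
  simp only [not_lt] at h
  omega

lemma measurable_layerSum : Measurable (layerSum (m := m) a i κ) :=
  Finset.measurable_fun_sum _ fun x _ ↦ measurable_halfSign.comp (measurable_pi_apply x)

lemma measurableSet_exists_le_layerSum (A : Finset (Fin m)) :
    MeasurableSet {P : JitterConfig m d | ∃ κ ∈ A, t ≤ layerSum a i κ P} := by
  have hunion : {P : JitterConfig m d | ∃ κ ∈ A, t ≤ layerSum a i κ P} =
      ⋃ κ ∈ A, {P | t ≤ layerSum a i κ P} := by
    ext P
    simp
  rw [hunion]
  exact A.measurableSet_biUnion fun κ _ ↦ measurableSet_le measurable_const measurable_layerSum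

lemma exists_selectedCorner_eq (h : ∃ κ : Fin m, a ≤ (κ : ℕ) ∧ t ≤ layerSum a i κ P) :
    ∃ κ : Fin m, a ≤ (κ : ℕ) ∧ t ≤ layerSum a i κ P ∧ selectedCorner a t P i = 2 * κ + 1 :=
  ⟨h.choose, h.choose_spec.1, h.choose_spec.2, dif_pos h⟩

lemma two_mul_le_selectedCorner : 2 * a ≤ selectedCorner a t P i := by
  by_cases h : ∃ κ : Fin m, a ≤ (κ : ℕ) ∧ t ≤ layerSum a i κ P
  · obtain ⟨κ, ha, -, hk⟩ := exists_selectedCorner_eq h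
    omega
  · rw [selectedCorner, dif_neg h]

lemma selectedCorner_lt (ha : a < m) : selectedCorner a t P i < 2 * m := by
  by_cases h : ∃ κ : Fin m, a ≤ (κ : ℕ) ∧ t ≤ layerSum a i κ P
  · obtain ⟨κ, -, -, hk⟩ := exists_selectedCorner_eq h
    omega
  · rw [selectedCorner, dif_neg h]
    omega

-- The corner factors through the finitely many predicates `t ≤ layerSum a i κ P`.
lemma measurable_selectedCorner :
    Measurable (selectedCorner (m := m) (d := d) a t) := by
  classical
  refine measurable_pi_lambda _ fun i ↦ ?_
  have hlarge : Measurable fun (P : JitterConfig m d) (κ : Fin m) ↦ t ≤ layerSum a i κ P :=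
    measurable_pi_lambda _ fun κ ↦
      measurableSet_setOfPred.1 (measurableSet_le measurable_const measurable_layerSum)
  exact (Measurable.of_discrete (f := fun e : Fin m → Prop ↦
    if h : ∃ κ : Fin m, a ≤ (κ : ℕ) ∧ e κ then 2 * (h.choose : ℕ) + 1 else 2 * a)).comp hlarge

lemma dependsOn_selectedCorner (hx : x ∉ layeredCubes m d a) :
    DependsOn (selectedCorner (m := m) (d := d) a t) {x}ᶜ := by
  intro P P' hPP'
  have hsum (i : Fin d) (κ : Fin m) : layerSum a i κ P = layerSum a i κ P' := by
    refine Finset.sum_congr rfl fun x' hx' ↦ ?_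
    rw [hPP' x']
    rintro rfl
    exact hx (Finset.mem_filter.2 ⟨Finset.mem_univ _, i, (Finset.mem_filter.1 hx').2.2⟩)
  funext i
  simp only [selectedCorner, hsum]

/-- The cubes of the layers bisected by the upper faces of `halfGridBox m d k`. -/
def bisectedCubes (a : ℕ) (k : Fin d → ℕ) (i : Fin d) : Finset (Fin d → Fin m) :=
  Finset.univ.filter fun x ↦ k i = 2 * (x i : ℕ) + 1 ∧ ∀ j ≠ i, (x j : ℕ) < a

lemma bisectedCubes_eq_layer (hk : k i = 2 * (κ : ℕ) + 1) : bisectedCubes a k i = layer a i κ := by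
  refine Finset.filter_congr fun x _ ↦ and_congr_left fun _ ↦ ?_
  rw [hk, Fin.ext_iff]
  omega

lemma bisectedCubes_eq_empty (hk : Even (k i)) : bisectedCubes (m := m) a k i = ∅ :=
  Finset.filter_eq_empty_iff.2 fun x _ hx ↦ by
    rw [hx.1] at hk
    exact Nat.not_even_two_mul_add_one _ hk

lemma indicator_le_sum_bisectedCubes (a : ℕ) (t : ℝ) (i : Fin d) (P : JitterConfig m d) :
    {P | ∃ κ ∈ Finset.univ.filter fun κ : Fin m ↦ a ≤ (κ : ℕ), t ≤ layerSum a i κ P}.indicator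
      (fun _ ↦ t) P ≤ ∑ x ∈ bisectedCubes a (selectedCorner a t P) i, halfSign i x (P x) := by
  classical
  simp only [Set.indicator_apply, Set.mem_ofPred_eq, Finset.mem_filter_univ]
  split_ifs with h
  · obtain ⟨κ, -, ht, hk⟩ := exists_selectedCorner_eq h
    rw [bisectedCubes_eq_layer hk]
    exact ht
  · have hk : selectedCorner a t P i = 2 * a := dif_neg h
    rw [bisectedCubes_eq_empty (hk ▸ even_two_mul a), Finset.sum_empty]

lemma measurable_uncurry_cubeDisc_halfGridBox :
    Measurable (Function.uncurry fun k : Fin d → ℕ ↦ cubeDisc m d (halfGridBox m d k) x) :=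
  measurable_from_prod_countable_right fun k ↦ show Measurable (cubeDisc m d (halfGridBox m d k) x)
    from measurable_cubeDisc measurableSet_anchoredBox

variable [NeZero m]

lemma sum_layeredCubes_cubeDisc (hP : ∀ x, P x ∈ jitterCube m d x) (hk : ∀ i, 2 * a ≤ k i) :
    ∑ x ∈ layeredCubes m d a, cubeDisc m d (halfGridBox m d k) x (P x) =
      ∑ i, (∑ x ∈ bisectedCubes a k i, halfSign i x (P x)) / 2 := by
  simp only [bisectedCubes, layeredCubes, Finset.sum_filter, Finset.sum_div, ite_div, zero_div]
  rw [Finset.sum_comm]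
  refine Finset.sum_congr rfl fun x _ ↦ ?_
  split_ifs with hx
  · obtain ⟨i, hi⟩ := hx
    rw [cubeDisc_halfGridBox (i := i) (fun j hj ↦ by linarith [hi j hj, hk j]) (hP x),
      Finset.sum_eq_single i]
    · simp only [and_iff_left hi]
    · intro j _ hj
      refine if_neg fun h ↦ ?_
      have := hi j hj
      have := hk j
      omega
    · simp
  · exact (Finset.sum_eq_zero fun i _ ↦ if_neg fun h ↦ hx ⟨i, h.2⟩).symm

lemma integrable_cubeDisc_selectedCorner :
    Integrable (fun P ↦ cubeDisc m d (halfGridBox m d (selectedCorner a t P)) x (P x))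
      (jitterMeasure m d) :=
  .of_bound (measurable_uncurry_cubeDisc_halfGridBox.comp
    (measurable_selectedCorner.prodMk (measurable_pi_apply x))).aestronglyMeasurable 1
    (.of_forall fun _ ↦ abs_cubeDisc_le_one)

-- Outside the layers the selection ignores the point, whose contribution is therefore centered.
lemma integral_cubeDisc_selectedCorner (hx : x ∉ layeredCubes m d a) :
    ∫ P, cubeDisc m d (halfGridBox m d (selectedCorner a t P)) x (P x) ∂jitterMeasure m d = 0 :=
  integral_comp_eval_eq_zero_of_dependsOn (cubeMeasure m d) measurable_selectedCorner
    (dependsOn_selectedCorner hx) measurable_uncurry_cubeDisc_halfGridBox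
    integrable_cubeDisc_selectedCorner fun _ ↦ integral_cubeDisc measurableSet_anchoredBox

lemma sum_cubeDisc_selectedCorner_le_starDisc (ha : a < m) (t : ℝ) (P : JitterConfig m d) :
    ∑ x, cubeDisc m d (halfGridBox m d (selectedCorner a t P)) x (P x) ≤ starDisc m d P := by
  have hm : (0 : ℝ) < 2 * m := by exact_mod_cast mul_pos two_pos (NeZero.pos m)
  have hcorner (i : Fin d) : (selectedCorner a t P i : ℝ) / (2 * m) ∈ Set.Ico (0 : ℝ) 1 :=
    ⟨by positivity, (div_lt_one hm).2 (by exact_mod_cast selectedCorner_lt ha)⟩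
  simp only [halfGridBox]
  rw [← jdisc_eq_sum_cubeDisc P measurableSet_anchoredBox
    (anchoredBox_mono fun i ↦ (hcorner i).2.le)]
  exact (le_abs_self _).trans (abs_jdisc_le_starDisc hcorner)

/- The discrepancy of the adapted box has the same mean as its part on the layers, and that part
is the sum over all directions of half the selected layer sums. -/
lemma sum_measureReal_le_expStarDisc (ha : a < m) (t : ℝ) :
    ∑ i : Fin d, t / 2 * (jitterMeasure m d).real
      {P | ∃ κ ∈ Finset.univ.filter fun κ : Fin m ↦ a ≤ (κ : ℕ), t ≤ layerSum a i κ P} ≤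
      expStarDisc m d := by
  set μ := jitterMeasure m d
  set E : Fin d → Set (JitterConfig m d) := fun i ↦
    {P | ∃ κ ∈ Finset.univ.filter fun κ : Fin m ↦ a ≤ (κ : ℕ), t ≤ layerSum a i κ P}
  have hEm (i : Fin d) : MeasurableSet (E i) := measurableSet_exists_le_layerSum _
  set g : (Fin d → Fin m) → JitterConfig m d → ℝ := fun x P ↦
    cubeDisc m d (halfGridBox m d (selectedCorner a t P)) x (P x) with hg
  have hgi (x : Fin d → Fin m) : Integrable (g x) μ := integrable_cubeDisc_selectedCorner
  have hEi (i : Fin d) : Integrable (fun P ↦ (E i).indicator (fun _ ↦ t) P / 2) μ :=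
    ((integrable_const t).indicator (hEm i)).div_const 2
  calc ∑ i, t / 2 * μ.real (E i)
      = ∫ P, ∑ i, (E i).indicator (fun _ ↦ t) P / 2 ∂μ := by
        rw [integral_finsetSum _ fun i _ ↦ hEi i]
        refine Finset.sum_congr rfl fun i _ ↦ ?_
        rw [integral_div, integral_indicator_const _ (hEm i), smul_eq_mul]
        ring
    _ ≤ ∫ P, ∑ x ∈ layeredCubes m d a, g x P ∂μ := by
        refine integral_mono_ae (integrable_finsetSum _ fun i _ ↦ hEi i)
          (integrable_finsetSum _ fun x _ ↦ hgi x) ?_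
        filter_upwards [ae_forall_mem_jitterCube] with P hP
        rw [hg, sum_layeredCubes_cubeDisc hP fun i ↦ two_mul_le_selectedCorner]
        gcongr with i
        exact indicator_le_sum_bisectedCubes a t i P
    _ = ∫ P, ∑ x, g x P ∂μ := by
        rw [integral_finsetSum _ fun x _ ↦ hgi x, integral_finsetSum _ fun x _ ↦ hgi x]
        exact Finset.sum_subset (Finset.subset_univ _) fun x _ hx ↦
          integral_cubeDisc_selectedCorner hx
    _ ≤ expStarDisc m d :=
        integral_mono (integrable_finsetSum _ fun x _ ↦ hgi x) integrable_starDisc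
          (sum_cubeDisc_selectedCorner_le_starDisc ha t)

end AdaptiveBoxes

section LowerBound

lemma one_sub_pow_pow_le {q r : ℕ} (hqr : 18 ^ q ≤ 18 * r) :
    (1 - (1 / 18 : ℝ) ^ q) ^ r ≤ 18 / 19 := by
  have hp1 : (1 / 18 : ℝ) ^ q ≤ 1 := pow_le_one₀ (by norm_num) (by norm_num)
  have hp : 1 / 18 ≤ (r : ℝ) * (1 / 18) ^ q := by
    have hqr' : (18 : ℝ) ^ q ≤ 18 * r := by exact_mod_cast hqr
    rw [div_pow, one_pow, mul_one_div, div_le_div_iff₀ (by norm_num) (by positivity)]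
    linarith
  calc (1 - (1 / 18 : ℝ) ^ q) ^ r
      ≤ exp (-(1 / 18) ^ q) ^ r :=
        pow_le_pow_left₀ (sub_nonneg.2 hp1) (one_sub_le_exp_neg _) r
    _ = (exp (r * (1 / 18) ^ q))⁻¹ := by rw [← exp_nat_mul, mul_neg, exp_neg]
    _ ≤ (19 / 18)⁻¹ := by
        gcongr
        linarith [add_one_le_exp ((r : ℝ) * (1 / 18) ^ q)]
    _ = 18 / 19 := by norm_num

lemma le_measureReal_exists_le_layerSum {m d a b q : ℕ} [NeZero m] (ha : a ≤ m) (hb : 0 < b)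
    (hq : 1 ≤ q) (hqb : q * b ≤ a ^ (d - 1)) (hqa : 18 ^ q ≤ 18 * (m - a)) (i : Fin d) :
    1 / 19 ≤ (jitterMeasure m d).real {P | ∃ κ ∈ Finset.univ.filter fun κ : Fin m ↦ a ≤ (κ : ℕ),
      q * (√b / 8) ≤ layerSum a i κ P} := by
  have hone (κ : Fin m) : (1 / 18 : ℝ) ^ q ≤
      (jitterMeasure m d).real {P | q * (√b / 8) ≤ layerSum a i κ P} :=
    (isRademacherFamily_halfSign i).pow_le_measureReal_sum hb hq (hqb.trans_eq (card_layer ha).symm)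
  have hsome := (isRademacherFamily_halfSign i).one_sub_pow_le_measureReal_exists_sum
    (pairwise_disjoint_layer a i) (Finset.univ.filter fun κ : Fin m ↦ a ≤ (κ : ℕ))
    fun κ _ ↦ hone κ
  rw [card_filter_le_val ha] at hsome
  refine le_trans ?_ hsome
  linarith [one_sub_pow_pow_le hqa]

-- As `m ≤ (1 + 1 / (d - 1)) a`, passing from `m ^ (d - 1)` to `a ^ (d - 1)` costs a factor `e`.
lemma pow_sub_one_le_three_mul {m d : ℕ} (hd : 2 ≤ d) :
    (m : ℝ) ^ (d - 1) ≤ 3 * (m - m / d : ℕ) ^ (d - 1) := by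
  set a := m - m / d
  obtain ⟨e, rfl⟩ : ∃ e, d = e + 1 := ⟨d - 1, by omega⟩
  have he : (0 : ℝ) < e := by exact_mod_cast (by omega : 0 < e)
  have hma : (m : ℝ) * e ≤ a * (e + 1) := by
    have hdiv := Nat.div_mul_le_self m (e + 1)
    have hm : m = a + m / (e + 1) := (Nat.sub_add_cancel (Nat.div_le_self m (e + 1))).symm
    have : m * e ≤ a * (e + 1) := by nlinarith
    exact_mod_cast this
  have hm : (m : ℝ) ≤ a * exp (1 / e) := by
    calc (m : ℝ) ≤ a * (1 / e + 1) := by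
          rw [mul_add, mul_one_div, mul_one, div_add' _ _ _ he.ne', le_div_iff₀ he]
          linarith
      _ ≤ a * exp (1 / e) := by gcongr; exact add_one_le_exp _
  rw [Nat.add_sub_cancel]
  calc (m : ℝ) ^ e ≤ (a * exp (1 / e)) ^ e := by gcongr
    _ = exp 1 * a ^ e := by
        rw [mul_pow, ← exp_nat_mul, mul_one_div_cancel he.ne', mul_comm]
    _ ≤ 3 * a ^ e := by
        gcongr
        exact exp_one_lt_three.le

lemma one_add_log_div_le_log {d m : ℕ} (hd : 0 < d) (hdm : d ≤ m) :
    1 + log ((m : ℝ) / d) ≤ 4 * (Nat.log 18 (m / d) + 1 : ℕ) := by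
  set q := Nat.log 18 (m / d) + 1
  have hdR : (0 : ℝ) < d := by exact_mod_cast hd
  have hmd : (m : ℝ) / d ≤ 18 ^ q := by
    have hlt : m < 18 ^ q * d :=
      (Nat.div_lt_iff_lt_mul hd).1 (Nat.lt_pow_succ_log_self (by norm_num) _)
    rw [div_le_iff₀ hdR]
    exact_mod_cast hlt.le
  have hlog18 : log 18 ≤ 3 := by
    rw [log_le_iff_le_exp (by norm_num)]
    calc (18 : ℝ) ≤ 2.7 ^ 3 := by norm_num
      _ ≤ exp 1 ^ 3 := by gcongr; linarith [exp_one_gt_d9]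
      _ = exp 3 := by rw [← exp_nat_mul]; norm_num
  have hlog : log ((m : ℝ) / d) ≤ q * 3 := by
    calc log ((m : ℝ) / d) ≤ log (18 ^ q) :=
          log_le_log (div_pos (by exact_mod_cast hd.trans_le hdm) hdR) hmd
      _ = q * log 18 := log_pow _ _
      _ ≤ q * 3 := by gcongr
  have hq : (1 : ℝ) ≤ q := by exact_mod_cast Nat.le_add_left 1 _
  linarith

lemma rpow_mul_sqrt_le {d m b : ℕ} (hd : 2 ≤ d) (hdm : d ≤ m)
    (hb : (m - m / d) ^ (d - 1) ≤ 2 * ((Nat.log 18 (m / d) + 1) * b)) :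
    (m : ℝ) ^ (((d : ℝ) - 1) / 2) * √(1 + log ((m : ℝ) / d)) ≤
      40 * ((Nat.log 18 (m / d) + 1 : ℕ) * (√b / 8)) := by
  set q := Nat.log 18 (m / d) + 1
  have hm : (0 : ℝ) < m := by exact_mod_cast (by omega : 0 < m)
  have hpow : ((m : ℝ) ^ (((d : ℝ) - 1) / 2)) ^ 2 = (m : ℝ) ^ (d - 1) := by
    refine mul_right_cancel₀ hm.ne' ?_
    rw [sq_rpow_half_mul_self hm, ← pow_succ, Nat.sub_add_cancel (one_le_two.trans hd)]
  have hlog : 0 ≤ log ((m : ℝ) / d) :=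
    log_nonneg ((one_le_div (by exact_mod_cast (by omega : 0 < d))).2 (by exact_mod_cast hdm))
  have hb' : ((m - m / d : ℕ) : ℝ) ^ (d - 1) ≤ 2 * (q * b) := by exact_mod_cast hb
  refine (pow_le_pow_iff_left₀ (by positivity) (by positivity) two_ne_zero).1 ?_
  calc ((m : ℝ) ^ (((d : ℝ) - 1) / 2) * √(1 + log ((m : ℝ) / d))) ^ 2
      = (m : ℝ) ^ (d - 1) * (1 + log ((m : ℝ) / d)) := by
        rw [mul_pow, hpow, sq_sqrt (by linarith)]
    _ ≤ 3 * (2 * (q * b)) * (4 * q) := by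
        gcongr
        · exact (pow_sub_one_le_three_mul hd).trans (by gcongr)
        · exact one_add_log_div_le_log (by omega) hdm
    _ ≤ 25 * (q ^ 2 * b) := by nlinarith [mul_nonneg (sq_nonneg (q : ℝ)) b.cast_nonneg]
    _ = (40 * (q * (√b / 8))) ^ 2 := by
        rw [mul_pow, mul_pow, div_pow, sq_sqrt b.cast_nonneg]
        ring

theorem le_expStarDisc {d m : ℕ} (hd : 2 ≤ d) (hdm : d ≤ m) :
    1 / 2000 * d * (m : ℝ) ^ (((d : ℝ) - 1) / 2) * √(1 + log ((m : ℝ) / d)) ≤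
      expStarDisc m d := by
  have : NeZero m := ⟨by omega⟩
  set r := m / d
  have hr : 1 ≤ r := (Nat.one_le_div_iff (by omega)).2 hdm
  have hrm : r * 2 ≤ m := (Nat.mul_le_mul_left r hd).trans (Nat.div_mul_le_self m d)
  set n := (m - r) ^ (d - 1)
  set q := Nat.log 18 r + 1 with hq
  have hqn : q ≤ n := calc
    q ≤ r := Nat.log_lt_self 18 (by omega)
    _ ≤ m - r := by omega
    _ ≤ n := Nat.le_self_pow (by omega) _
  have hqr : 18 ^ q ≤ 18 * r := by
    rw [hq, pow_succ']
    exact Nat.mul_le_mul_left 18 (Nat.pow_log_le_self 18 (by omega))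
  set b := n / q
  have hb : 0 < b := Nat.div_pos hqn (Nat.succ_pos _)
  have hnb : n ≤ 2 * (q * b) := by
    have hlt : n < b * q + q := Nat.lt_div_mul_add (Nat.succ_pos _)
    nlinarith
  have hprob := le_measureReal_exists_le_layerSum (d := d) (Nat.sub_le m r) hb (Nat.succ_pos _)
    (Nat.mul_div_le n q) (by rwa [Nat.sub_sub_self (by omega)])
  set t : ℝ := q * (√b / 8)
  have hsize : (m : ℝ) ^ (((d : ℝ) - 1) / 2) * √(1 + log ((m : ℝ) / d)) ≤ 40 * t :=
    rpow_mul_sqrt_le hd hdm hnb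
  calc 1 / 2000 * d * (m : ℝ) ^ (((d : ℝ) - 1) / 2) * √(1 + log ((m : ℝ) / d))
      = d * ((m : ℝ) ^ (((d : ℝ) - 1) / 2) * √(1 + log ((m : ℝ) / d)) / 2000) := by ring
    _ ≤ d * (t / 2 * (1 / 19)) := by
        gcongr
        linarith [(by positivity : 0 ≤ t)]
    _ = ∑ _i : Fin d, t / 2 * (1 / 19) := by simp
    _ ≤ _ := Finset.sum_le_sum fun i _ ↦ mul_le_mul_of_nonneg_left (hprob i) (by positivity)
    _ ≤ expStarDisc m d := sum_measureReal_le_expStarDisc (by omega) t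

end LowerBound

/-- There exist constants `c > 0` and `C > 0` such that for all integers `d ≥ 2` and `m ≥ d`,
the expected star discrepancy of a jittered sampling point set of `N = m^d` points in `[0,1)^d`
satisfies `c·d·m^((d−1)/2)·√(1 + log(m/d)) ≤ E[D*(P)] ≤ C·d·m^((d−1)/2)·√(1 + log(m/d))`. -/
theorem jittered_sampling_sharp_bounds :
    ∃ c C : ℝ, 0 < c ∧ 0 < C ∧
      ∀ d m : ℕ, 2 ≤ d → d ≤ m →
        c * d * (m : ℝ) ^ (((d : ℝ) - 1) / 2) * Real.sqrt (1 + Real.log ((m : ℝ) / d))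
            ≤ expStarDisc m d ∧
          expStarDisc m d
            ≤ C * d * (m : ℝ) ^ (((d : ℝ) - 1) / 2) * Real.sqrt (1 + Real.log ((m : ℝ) / d)) := by
  exact ⟨1 / 2000, 6000, by norm_num, by norm_num, fun d m hd hdm ↦
    ⟨le_expStarDisc hd hdm, expStarDisc_le hd hdm⟩⟩
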